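/- arXiv:2110.10740 — 2 statements merged into one kernel-verified Lean document; each statement's English description precedes it below -/
import Mathlib

section
/- Let M = (X, I) be a matroid, let k be an integer with 1 ≤ k < rk(M), and let ω : X → ℝ_{>0} be a weight function. Then I_ω(k)² = (1 + 1/k)·(1 + 1/(p(k−1) − 1))·I_ω(k−1)·I_ω(k+1) if and only if there exists s > 0 such that every independent set S ∈ I with |S| = k−1 satisfies: (ME1) |Par(S)| = p(k−1), and (ME2) Σ_{x ∈ C} ω(x) = s for every parallel class C ∈ Par(S). -/
open scoped Classical BigOperators

noncomputable section

variable {X : Type*} [Fintype X] [DecidableEq X]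

/-- The number of independent sets of size `k` of the set system `Indep`. -/
def numIndep (Indep : Finset X → Prop) (k : ℕ) : ℕ :=
  (Finset.univ.filter (fun S : Finset X => Indep S ∧ S.card = k)).card

/-- The weighted count of independent sets of size `k`:
`I_ω(k) = Σ_{S ∈ I, |S| = k} Π_{x ∈ S} ω(x)`. -/
def wNumIndep (Indep : Finset X → Prop) (ω : X → ℝ) (k : ℕ) : ℝ :=
  ∑ S ∈ Finset.univ.filter (fun S : Finset X => Indep S ∧ S.card = k), ∏ x ∈ S, ω x

/-- The rank of a matroid: the maximal size of an independent set. -/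
def matroidRk (Indep : Finset X → Prop) : ℕ :=
  Finset.univ.sup (fun S : Finset X => if Indep S then S.card else 0)

/-- The set of continuations of an independent set `S`. -/
def mCont (Indep : Finset X → Prop) (S : Finset X) : Finset X :=
  Finset.univ.filter (fun x => x ∉ S ∧ Indep (insert x S))

/-- The parallel class of `x ∈ Cnt(S)`:  the set of continuations `y` with `y ∼_S x`,
i.e. `y = x` or `S ∪ {x,y}` is not independent. -/
def mParClass (Indep : Finset X → Prop) (S : Finset X) (x : X) : Finset X :=
  (mCont Indep S).filter (fun y => y = x ∨ ¬ Indep (insert y (insert x S)))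

/-- The set `Par(S)` of parallel classes of `S`. -/
def mParClasses (Indep : Finset X → Prop) (S : Finset X) : Finset (Finset X) :=
  (mCont Indep S).image (mParClass Indep S)

/-- The `k`-continuation number `p(k)`: the maximal number of parallel classes of an
independent set of size `k`. -/
def contNum (Indep : Finset X → Prop) (k : ℕ) : ℕ :=
  (Finset.univ.filter (fun S : Finset X => Indep S ∧ S.card = k)).sup
    (fun S => (mParClasses Indep S).card)

/-!
The theorem is read off from a combinatorial atlas in the sense of Chan and Pak. On `ℝ^X × ℝ` take
at each independent set `S` of size `k - 1` the form `localForm`, which records the pairs that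
extend `S`, together with one extra coordinate. Its reverse Cauchy–Schwarz inequality is the
ordinary Cauchy–Schwarz inequality for the sums over the parallel classes of `S`, and this is where
`p(k - 1)` enters. Gluing these forms with weights `ω` down to `∅` preserves the reverse inequality:
rows of a glued form are rows of the forms glued into it, so after normalising by its row sums a
glued form `M` is the adjacency form of a connected weighted graph, and an eigenvector of it with
positive eigenvalue `μ` satisfies both `μ ≤ 1` (the graph Laplacian is nonnegative) and `μ ≤ μ ^ 2`
(reverse inequalities of the pieces); hence `μ = 1`, an eigenvalue which is simple by connectedness.

At `h = (ω, 0)` and `o = (0, 1)` the form at `∅` takes the values `I_ω(k + 1)`, `I_ω(k)` and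
`I_ω(k - 1)`, up to explicit factors. Equality therefore holds iff `h - a • o` is in the kernel of
that form for some `a > 0`. By the equality case at each layer, the kernel of a glued form is the
intersection of the kernels of its pieces, and `h - a • o` is in the kernel of every `localForm` iff
(ME1) and (ME2) hold.
-/

section Hyperbolic

variable {V : Type*} [AddCommGroup V] [Module ℝ V] {M : LinearMap.BilinForm ℝ V} {h h₀ o v : V}

/-- The reverse Cauchy–Schwarz inequality for a bilinear form `M` at the reference vector `h`.
When `M` is symmetric and `M h h > 0`, it says that `M` has exactly one positive direction. -/
def IsHyperbolicAt (M : LinearMap.BilinForm ℝ V) (h : V) : Prop :=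
  ∀ v, M v v * M h h ≤ M h v ^ 2

theorem isHyperbolicAt_iff (hM : M.IsSymm) (hh : 0 < M h h) :
    IsHyperbolicAt M h ↔ ∀ v, M h v = 0 → M v v ≤ 0 := by
  refine ⟨fun H v hv => ?_, fun H v => ?_⟩
  · have := H v
    rw [hv] at this
    nlinarith
  · have key := H (M h h • v - M h v • h) (by simp; ring)
    have expand : M (M h h • v - M h v • h) (M h h • v - M h v • h) =
        M h h * (M v v * M h h - M h v ^ 2) := by
      simp [hM.eq v h]
      ring
    rw [expand] at key
    nlinarith

theorem IsHyperbolicAt.of_pos (H : IsHyperbolicAt M h₀) (hM : M.IsSymm) (h₀pos : 0 < M h₀ h₀)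
    (hpos : 0 < M h h) : IsHyperbolicAt M h := by
  rw [isHyperbolicAt_iff hM hpos]
  intro v hv
  have hne : 0 < M h₀ h ^ 2 := (mul_pos hpos h₀pos).trans_le (H h)
  have key := (isHyperbolicAt_iff hM h₀pos).1 H (M h₀ v • h - M h₀ h • v) (by simp; ring)
  have expand : M (M h₀ v • h - M h₀ h • v) (M h₀ v • h - M h₀ h • v) =
      M h₀ v ^ 2 * M h h + M h₀ h ^ 2 * M v v := by
    simp [hM.eq v h, hv]
    ring
  rw [expand] at key
  nlinarith [mul_nonneg (sq_nonneg (M h₀ v)) hpos.le]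

theorem IsHyperbolicAt.mul_apply_eq_of_eq (H : IsHyperbolicAt M h) (hM : M.IsSymm)
    (hv : M v v * M h h = M h v ^ 2) (w : V) : M h h * M v w = M h v * M h w := by
  let P : LinearMap.BilinForm ℝ V :=
    LinearMap.mk₂ ℝ (fun v w => M h v * M h w - M h h * M v w)
      (fun _ _ _ => by simp; ring) (fun _ _ _ => by simp; ring)
      (fun _ _ _ => by simp; ring) (fun _ _ _ => by simp; ring)
  have hP : ∀ x y, P x y = M h x * M h y - M h h * M x y := fun _ _ => rfl
  have Pnonneg : ∀ x, 0 ≤ P x x := fun x => by rw [hP]; linarith [H x]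
  have Psymm : LinearMap.IsSymm P := ⟨fun x y => by
    simp only [RingHom.id_apply, hP, hM.eq x y]
    ring⟩
  have cs := P.apply_sq_le_of_symm Pnonneg Psymm v w
  have Pv : P v v = 0 := by rw [hP]; linarith
  rw [Pv, zero_mul] at cs
  have := pow_eq_zero_iff two_ne_zero |>.1 (le_antisymm cs (sq_nonneg _))
  rw [hP] at this
  linarith

theorem IsHyperbolicAt.eq_zero_iff (H : IsHyperbolicAt M h) (hM : M.IsSymm) (hh : 0 < M h h) :
    M v = 0 ↔ M h v = 0 ∧ M v v = 0 := by
  refine ⟨fun hv => ⟨by rw [hM.eq, hv, LinearMap.zero_apply], by rw [hv, LinearMap.zero_apply]⟩,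
    fun ⟨hhv, hvv⟩ => LinearMap.ext fun w => ?_⟩
  have := H.mul_apply_eq_of_eq hM (by rw [hvv, hhv]; ring) w
  rw [hhv, zero_mul] at this
  exact (mul_eq_zero.1 this).resolve_left hh.ne'

theorem IsHyperbolicAt.mul_eq_sq_iff (H : IsHyperbolicAt M h) (hM : M.IsSymm) (hh : 0 < M h h)
    (ho : 0 < M h o) : M o o * M h h = M h o ^ 2 ↔ ∃ a : ℝ, 0 < a ∧ M (h - a • o) = 0 := by
  constructor
  · intro heq
    refine ⟨M h h / M h o, by positivity, LinearMap.ext fun w => ?_⟩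
    have := H.mul_apply_eq_of_eq hM heq w
    simp only [map_sub, map_smul, LinearMap.sub_apply, LinearMap.smul_apply, smul_eq_mul,
      LinearMap.zero_apply]
    field_simp
    linarith
  · rintro ⟨a, -, hker⟩
    have key : ∀ w, M h w = a * M o w := fun w => by
      have := LinearMap.congr_fun hker w
      simpa [sub_eq_zero] using this
    rw [key h, key o, hM.eq o h, key o]
    ring

end Hyperbolic

section Spectral

open scoped InnerProductSpace

variable {E V : Type*} [NormedAddCommGroup E] [InnerProductSpace ℝ E]
  [AddCommGroup V] [Module ℝ V] {M : LinearMap.BilinForm ℝ V} {L : V →ₗ[ℝ] E} {J : E →ₗ[ℝ] V}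

theorem inner_apply_self_nonpos_of_le_norm_sq [FiniteDimensional ℝ E] {T : E →ₗ[ℝ] E}
    (hT : T.IsSymmetric) {w u : E}
    (hle : ∀ a, ⟪a, T a⟫_ℝ ≤ ‖a‖ ^ 2) (heq : ∀ a, ⟪a, T a⟫_ℝ = ‖a‖ ^ 2 → ∃ c : ℝ, a = c • w)
    (hsq : ∀ a, ⟪a, T a⟫_ℝ ≤ ‖T a‖ ^ 2) (hu : ⟪w, T u⟫_ℝ = 0) : ⟪u, T u⟫_ℝ ≤ 0 := by
  let b := hT.eigenvectorBasis rfl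
  let μ := hT.eigenvalues rfl
  have norm_b : ∀ i, ‖b i‖ = 1 := b.orthonormal.1
  have T_b : ∀ i, T (b i) = μ i • b i := hT.apply_eigenvectorBasis rfl
  have inner_T_b : ∀ i, ⟪b i, T (b i)⟫_ℝ = μ i := fun i => by
    rw [T_b, inner_smul_right, real_inner_self_eq_norm_sq, norm_b, one_pow, mul_one]
  have inner_b_T : ∀ i, ⟪b i, T u⟫_ℝ = μ i * ⟪b i, u⟫_ℝ := fun i => by
    rw [← hT, T_b, real_inner_smul_left]
  rw [← b.sum_inner_mul_inner]
  refine Finset.sum_nonpos fun i _ => ?_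
  rw [real_inner_comm, inner_b_T]
  have le_one : μ i ≤ 1 := by simpa [inner_T_b, norm_b] using hle (b i)
  have le_sq : μ i ≤ μ i ^ 2 := by
    have := hsq (b i)
    rwa [inner_T_b, T_b, norm_smul, norm_b, mul_one, Real.norm_eq_abs, sq_abs] at this
  have : μ i ≤ 0 ∨ μ i = 1 := by
    by_contra! hμ
    nlinarith [lt_of_le_of_ne le_one hμ.2]
  rcases this with nonpos | one
  · nlinarith [mul_nonneg (neg_nonneg.2 nonpos) (sq_nonneg ⟪b i, u⟫_ℝ)]
  · obtain ⟨c, hc⟩ := heq (b i) (by rw [inner_T_b, one, norm_b, one_pow])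
    have orthogonal : ⟪b i, T u⟫_ℝ = 0 := by rw [hc, real_inner_smul_left, hu, mul_zero]
    rw [← inner_b_T, orthogonal, mul_zero]

theorem isSymmetric_comp_of_inner_eq_apply (hM : M.IsSymm)
    (adj : ∀ a v, ⟪a, L v⟫_ℝ = M (J a) v) : (L ∘ₗ J).IsSymmetric := fun a b => by
  rw [LinearMap.comp_apply, LinearMap.comp_apply, real_inner_comm, adj, adj, hM.eq]

/-- If `M` is bounded above by the form pulled back along `L`, then `L v` is orthogonal to the
kernel of `L ∘ J`, so `v` can be corrected by some `J u` to lie in the kernel of `L`. -/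
theorem exists_comp_apply_eq_of_apply_self_le_norm_sq [FiniteDimensional ℝ E]
    (hM : M.IsSymm) (adj : ∀ a v, ⟪a, L v⟫_ℝ = M (J a) v)
    (hL : ∀ v, M v v ≤ ‖L v‖ ^ 2) (v : V) : ∃ u, L (J u) = L v := by
  have symm := isSymmetric_comp_of_inner_eq_apply hM adj
  suffices L v ∈ (L ∘ₗ J).range from this
  rw [← Submodule.orthogonal_orthogonal (L ∘ₗ J).range, symm.orthogonal_range,
    Submodule.mem_orthogonal]
  intro a ha
  have LJ : L (J a) = 0 := ha
  have bounded : ∀ t : ℝ, M v v + 2 * t * ⟪a, L v⟫_ℝ ≤ ‖L v‖ ^ 2 := fun t => by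
    have : M (J a) (J a) = 0 := by rw [← adj, LJ, inner_zero_right]
    have bound := hL (v + t • J a)
    simp only [map_add, map_smul, LinearMap.add_apply, LinearMap.smul_apply, smul_eq_mul, LJ,
      smul_zero, add_zero, this, hM.eq v, ← adj] at bound
    linarith
  by_contra hne
  have := bounded ((‖L v‖ ^ 2 - M v v + 1) / (2 * ⟪a, L v⟫_ℝ))
  have cancel : 2 * ((‖L v‖ ^ 2 - M v v + 1) / (2 * ⟪a, L v⟫_ℝ)) * ⟪a, L v⟫_ℝ =
      ‖L v‖ ^ 2 - M v v + 1 := by field_simp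
  linarith

theorem apply_self_nonpos_of_apply_self_le_norm_sq [FiniteDimensional ℝ E]
    (hM : M.IsSymm) (adj : ∀ a v, ⟪a, L v⟫_ℝ = M (J a) v)
    (hL : ∀ v, M v v ≤ ‖L v‖ ^ 2) (hJ : ∀ a, M (J a) (J a) ≤ ‖a‖ ^ 2) {w : E}
    (hw : ∀ a, M (J a) (J a) = ‖a‖ ^ 2 → ∃ c : ℝ, a = c • w) {v : V} (hv : ⟪w, L v⟫_ℝ = 0) :
    M v v ≤ 0 := by
  obtain ⟨u, hu⟩ := exists_comp_apply_eq_of_apply_self_le_norm_sq hM adj hL v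
  have symm := isSymmetric_comp_of_inner_eq_apply hM adj
  have apply_J : M (J u) (J u) ≤ 0 := by
    rw [← adj]
    exact inner_apply_self_nonpos_of_le_norm_sq symm (w := w) (fun a => by simpa [adj] using hJ a)
      (fun a => by simpa [adj] using hw a) (fun a => by simpa [adj] using hL (J a))
      (by rw [LinearMap.comp_apply, hu, hv])
  have apply_sub := hL (v - J u)
  have cross : M (J u) v = M (J u) (J u) := by rw [← adj, ← adj, hu]
  have expand : M (v - J u) (v - J u) = M v v - M (J u) (J u) := by
    simp only [map_sub, LinearMap.sub_apply, hM.eq v, cross]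
    ring
  rw [expand, map_sub, hu, sub_self, norm_zero] at apply_sub
  linarith

end Spectral

section Laplacian

variable {ι : Type*} [Fintype ι] {K : ι → ι → ℝ} (c : ι → ℝ)

theorem sum_degree_mul_sq_sub_sum_eq (K_symm : ∀ x y, K x y = K y x) :
    ∑ x, (∑ y, K x y) * c x ^ 2 - ∑ x, ∑ y, K x y * (c x * c y) =
      (∑ x, ∑ y, K x y * (c x - c y) ^ 2) / 2 := by
  have swap : ∑ x, ∑ y, K x y * c y ^ 2 = ∑ x, ∑ y, K x y * c x ^ 2 := by
    rw [Finset.sum_comm]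
    simp only [K_symm]
  have expand : ∀ x y, K x y * (c x - c y) ^ 2 =
      K x y * c x ^ 2 + K x y * c y ^ 2 - 2 * (K x y * (c x * c y)) := fun _ _ => by ring
  simp only [expand, Finset.sum_sub_distrib, Finset.sum_add_distrib, ← Finset.mul_sum, swap,
    Finset.sum_mul]
  ring

theorem sum_mul_mul_le_sum_degree_mul_sq (K_symm : ∀ x y, K x y = K y x)
    (K_nonneg : ∀ x y, 0 ≤ K x y) :
    ∑ x, ∑ y, K x y * (c x * c y) ≤ ∑ x, (∑ y, K x y) * c x ^ 2 := by
  rw [← sub_nonneg, sum_degree_mul_sq_sub_sum_eq c K_symm]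
  exact div_nonneg (Finset.sum_nonneg fun x _ => Finset.sum_nonneg fun y _ =>
    mul_nonneg (K_nonneg x y) (sq_nonneg _)) zero_le_two

variable {c}

theorem eq_of_sum_mul_mul_eq_sum_degree_mul_sq (K_symm : ∀ x y, K x y = K y x)
    (K_nonneg : ∀ x y, 0 ≤ K x y)
    (conn : ∀ x y, Relation.ReflTransGen (fun x y => 0 < K x y) x y)
    (heq : ∑ x, ∑ y, K x y * (c x * c y) = ∑ x, (∑ y, K x y) * c x ^ 2) (x y : ι) :
    c x = c y := by
  have nonneg : ∀ x y, 0 ≤ K x y * (c x - c y) ^ 2 := fun x y =>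
    mul_nonneg (K_nonneg x y) (sq_nonneg _)
  have total : ∑ x, ∑ y, K x y * (c x - c y) ^ 2 = 0 := by
    linarith [sum_degree_mul_sq_sub_sum_eq c K_symm]
  rw [Fintype.sum_eq_zero_iff_of_nonneg fun x => Finset.sum_nonneg fun y _ => nonneg x y] at total
  induction conn x y with
  | refl => rfl
  | @tail y z _ hyz ih =>
    have row : ∑ z, K y z * (c y - c z) ^ 2 = 0 := congrFun total y
    rw [Fintype.sum_eq_zero_iff_of_nonneg fun z => nonneg y z] at row
    have entry : K y z * (c y - c z) ^ 2 = 0 := congrFun row z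
    have sq_eq : (c y - c z) ^ 2 = 0 := (mul_eq_zero.1 entry).resolve_left hyz.ne'
    rw [ih, sub_eq_zero.1 (pow_eq_zero_iff two_ne_zero |>.1 sq_eq)]

end Laplacian

section LocalToGlobal

variable {V ι : Type*} [AddCommGroup V] [Module ℝ V] [Fintype ι]

theorem apply_sum_smul_self (M : LinearMap.BilinForm ℝ V) (c : ι → ℝ) (f : ι → V) :
    M (∑ x, c x • f x) (∑ x, c x • f x) = ∑ x, ∑ y, M (f x) (f y) * (c x * c y) := by
  simp only [map_sum, LinearMap.sum_apply, map_smul, LinearMap.smul_apply, smul_eq_mul,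
    Finset.mul_sum]
  rw [Finset.sum_comm]
  exact Finset.sum_congr rfl fun _ _ => Finset.sum_congr rfl fun _ _ => by ring

theorem apply_self_nonpos_of_le_sum_mul_sq [Nonempty ι] {M : LinearMap.BilinForm ℝ V}
    (hM : M.IsSymm) {f : ι → V} {d : ι → ℝ} (d_pos : ∀ x, 0 < d x)
    (hpull : ∀ v, M v v ≤ ∑ x, M (f x) v ^ 2 / d x)
    (hpush : ∀ c : ι → ℝ, M (∑ x, c x • f x) (∑ x, c x • f x) ≤ ∑ x, d x * c x ^ 2)
    (hconst : ∀ c : ι → ℝ, M (∑ x, c x • f x) (∑ x, c x • f x) = ∑ x, d x * c x ^ 2 →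
      ∀ x y, c x = c y)
    {v : V} (hv : ∑ x, M (f x) v = 0) : M v v ≤ 0 := by
  -- Rescaling the coordinate at `x` by `√(d x)` turns both weighted norms into the Euclidean one.
  let ρ : ι → ℝ := fun x => √(d x)
  have ρ_ne : ∀ x, ρ x ≠ 0 := fun x => (Real.sqrt_pos.2 (d_pos x)).ne'
  have ρ_sq : ∀ x, ρ x ^ 2 = d x := fun x => Real.sq_sqrt (d_pos x).le
  let L : V →ₗ[ℝ] EuclideanSpace ℝ ι :=
    { toFun := fun v => WithLp.toLp 2 fun x => M (f x) v / ρ x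
      map_add' := fun _ _ => by ext; simp; ring
      map_smul' := fun _ _ => by ext; simp; ring }
  let J : EuclideanSpace ℝ ι →ₗ[ℝ] V :=
    { toFun := fun a => ∑ x, (a x / ρ x) • f x
      map_add' := fun _ _ => by simp [add_div, add_smul, Finset.sum_add_distrib]
      map_smul' := fun _ _ => by simp [Finset.smul_sum, smul_smul, mul_div_assoc] }
  have adj : ∀ a v, inner ℝ a (L v) = M (J a) v := fun a v => by
    simp only [L, J, LinearMap.coe_mk, AddHom.coe_mk, PiLp.inner_apply, map_sum,
      LinearMap.sum_apply, map_smul, LinearMap.smul_apply, smul_eq_mul, RCLike.inner_apply,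
      conj_trivial]
    exact Finset.sum_congr rfl fun x _ => by ring
  have norm_L : ∀ v, ∑ x, M (f x) v ^ 2 / d x = ‖L v‖ ^ 2 := fun v => by
    simp [EuclideanSpace.real_norm_sq_eq, L, div_pow, ρ_sq]
  have norm_sq : ∀ a : EuclideanSpace ℝ ι, ∑ x, d x * (a x / ρ x) ^ 2 = ‖a‖ ^ 2 := fun a => by
    simp only [EuclideanSpace.real_norm_sq_eq, ← ρ_sq, ← mul_pow, mul_div_cancel₀ _ (ρ_ne _)]
  refine apply_self_nonpos_of_apply_self_le_norm_sq hM (w := WithLp.toLp 2 ρ) adj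
    (fun v => (hpull v).trans_eq (norm_L v)) (fun a => (hpush _).trans_eq (norm_sq a))
    (fun a ha => ?_) ?_
  · obtain ⟨x₀⟩ := ‹Nonempty ι›
    refine ⟨a x₀ / ρ x₀, PiLp.ext fun x => ?_⟩
    simp [hconst _ (ha.trans (norm_sq a).symm) x₀ x, ρ_ne]
  · rw [adj, ← hv]
    simp [J, ρ_ne]

/-- A vertex of a combinatorial atlas (Chan–Pak): the symmetric form `M` is the `ω`-weighted sum
of the local forms `N x`, and its row at the vector `e x` is the row of `N x` at the reference
vector `h`. -/
structure IsAtlasVertex (M : LinearMap.BilinForm ℝ V) (N : ι → LinearMap.BilinForm ℝ V)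
    (ω : ι → ℝ) (h : V) (e : ι → V) : Prop where
  isSymm : M.IsSymm
  eq_sum : M = ∑ x, ω x • N x
  apply_eq : ∀ x v, M (e x) v = N x h v
  weight_pos : ∀ x, 0 < ω x
  local_pos : ∀ x, 0 < N x h h

namespace IsAtlasVertex

variable {M : LinearMap.BilinForm ℝ V} {N : ι → LinearMap.BilinForm ℝ V} {ω : ι → ℝ} {h v : V}
  {e : ι → V}

theorem apply_eq_sum (A : IsAtlasVertex M N ω h e) (v w : V) : M v w = ∑ x, ω x * N x v w := by
  rw [A.eq_sum]
  simp

theorem ref_pos (A : IsAtlasVertex M N ω h e) [Nonempty ι] : 0 < M h h := by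
  rw [A.apply_eq_sum]
  exact Finset.sum_pos (fun x _ => mul_pos (A.weight_pos x) (A.local_pos x)) Finset.univ_nonempty

theorem sum_apply_smul (A : IsAtlasVertex M N ω h e) (v : V) :
    ∑ x, M (ω x • e x) v = M h v := by
  simp only [map_smul, LinearMap.smul_apply, smul_eq_mul, A.apply_eq, ← A.apply_eq_sum]

theorem row_pos (A : IsAtlasVertex M N ω h e) (x : ι) : 0 < M (ω x • e x) h := by
  rw [map_smul, LinearMap.smul_apply, A.apply_eq]
  exact mul_pos (A.weight_pos x) (A.local_pos x)

theorem apply_self_le_sum (A : IsAtlasVertex M N ω h e) (hN : ∀ x, IsHyperbolicAt (N x) h)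
    (v : V) : M v v ≤ ∑ x, M (ω x • e x) v ^ 2 / M (ω x • e x) h := by
  rw [A.apply_eq_sum]
  refine Finset.sum_le_sum fun x _ => ?_
  rw [le_div_iff₀ (A.row_pos x)]
  simp only [map_smul, LinearMap.smul_apply, smul_eq_mul, A.apply_eq]
  nlinarith [mul_le_mul_of_nonneg_left (hN x v) (sq_nonneg (ω x))]

theorem entry_pos_iff (A : IsAtlasVertex M N ω h e) (x y : ι) :
    0 < M (ω x • e x) (ω y • e y) ↔ 0 < M (e x) (e y) := by
  simp [A.weight_pos]

theorem apply_self_nonpos [Nonempty ι] (A : IsAtlasVertex M N ω h e)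
    (hN : ∀ x, IsHyperbolicAt (N x) h) (nonneg : ∀ x y, 0 ≤ M (e x) (e y))
    (conn : ∀ x y, Relation.ReflTransGen (fun x y => 0 < M (e x) (e y)) x y)
    (hv : M h v = 0) : M v v ≤ 0 := by
  let f : ι → V := fun x => ω x • e x
  have entry_symm : ∀ x y, M (f x) (f y) = M (f y) (f x) := fun x y => A.isSymm.eq _ _
  have entry_nonneg : ∀ x y, 0 ≤ M (f x) (f y) := fun x y => by
    simpa [f, A.weight_pos] using nonneg x y
  have entry_conn : ∀ x y, Relation.ReflTransGen (fun x y => 0 < M (f x) (f y)) x y := by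
    simpa only [f, A.entry_pos_iff] using conn
  have degree : ∀ x, ∑ y, M (f x) (f y) = M (f x) h := fun x => by
    simp only [A.isSymm.eq (f x), f, A.sum_apply_smul]
  refine apply_self_nonpos_of_le_sum_mul_sq A.isSymm A.row_pos (A.apply_self_le_sum hN)
    (fun c => ?_) (fun c heq => ?_) ((A.sum_apply_smul v).trans hv)
  · rw [apply_sum_smul_self]
    simpa only [degree] using sum_mul_mul_le_sum_degree_mul_sq c entry_symm entry_nonneg
  · rw [apply_sum_smul_self] at heq
    exact eq_of_sum_mul_mul_eq_sum_degree_mul_sq entry_symm entry_nonneg entry_conn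
      (by simpa only [degree] using heq)

theorem isHyperbolicAt [Nonempty ι] (A : IsAtlasVertex M N ω h e)
    (hN : ∀ x, IsHyperbolicAt (N x) h) (nonneg : ∀ x y, 0 ≤ M (e x) (e y))
    (conn : ∀ x y, Relation.ReflTransGen (fun x y => 0 < M (e x) (e y)) x y) :
    IsHyperbolicAt M h :=
  (isHyperbolicAt_iff A.isSymm A.ref_pos).2 fun _ => A.apply_self_nonpos hN nonneg conn

theorem eq_zero_iff (A : IsAtlasVertex M N ω h e) (hN : ∀ x, IsHyperbolicAt (N x) h)
    (symm : ∀ x, (N x).IsSymm) : M v = 0 ↔ ∀ x, N x v = 0 := by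
  refine ⟨fun hv => ?_, fun hv => LinearMap.ext fun w => ?_⟩
  · have ref : ∀ x, N x h v = 0 := fun x => by
      rw [← A.apply_eq, A.isSymm.eq, hv, LinearMap.zero_apply]
    have nonpos : ∀ x, ω x * N x v v ≤ 0 := fun x =>
      mul_nonpos_of_nonneg_of_nonpos (A.weight_pos x).le
        ((isHyperbolicAt_iff (symm x) (A.local_pos x)).1 (hN x) v (ref x))
    have total : ∑ x, ω x * N x v v = 0 := by rw [← A.apply_eq_sum, hv, LinearMap.zero_apply]
    rw [Finset.sum_eq_zero_iff_of_nonpos fun x _ => nonpos x] at total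
    exact fun x => ((hN x).eq_zero_iff (symm x) (A.local_pos x)).2
      ⟨ref x, (mul_eq_zero.1 (total x (Finset.mem_univ x))).resolve_left (A.weight_pos x).ne'⟩
  · simp [A.apply_eq_sum, hv]

end IsAtlasVertex

end LocalToGlobal

section Combinatorics

/-- The hereditary axiom of a matroid. -/
def IsHereditary (Indep : Finset X → Prop) : Prop :=
  ∀ S T : Finset X, S ⊆ T → Indep T → Indep S

/-- The exchange axiom of a matroid. -/
def HasExchange (Indep : Finset X → Prop) : Prop :=
  ∀ S T : Finset X, Indep S → Indep T → S.card < T.card →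
    ∃ x ∈ T, x ∉ S ∧ Indep (insert x S)

/-- The independent sets of size `k`, over which `wNumIndep` sums. -/
def indepFinset (Indep : Finset X → Prop) (k : ℕ) : Finset (Finset X) :=
  Finset.univ.filter fun S => Indep S ∧ S.card = k

variable {Indep : Finset X → Prop} {S : Finset X} {x y z : X} {k : ℕ}

omit [DecidableEq X] in
theorem mem_indepFinset : S ∈ indepFinset Indep k ↔ Indep S ∧ S.card = k := by
  simp [indepFinset]

theorem mem_mCont : x ∈ mCont Indep S ↔ x ∉ S ∧ Indep (insert x S) := by
  simp [mCont]

theorem card_insert_of_mem_mCont (hx : x ∈ mCont Indep S) : (insert x S).card = S.card + 1 :=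
  Finset.card_insert_of_notMem (mem_mCont.1 hx).1

omit [DecidableEq X] in
theorem exists_indep_lt_card_of_lt_matroidRk (hk : k < matroidRk Indep) :
    ∃ B, Indep B ∧ k < B.card := by
  obtain ⟨B, -, hB⟩ := Finset.lt_sup_iff.1 hk
  split_ifs at hB with hBI
  · exact ⟨B, hBI, hB⟩
  · exact absurd hB k.not_lt_zero

theorem HasExchange.mCont_nonempty (exch : HasExchange Indep) (hS : Indep S)
    (hlt : S.card < matroidRk Indep) : (mCont Indep S).Nonempty := by
  obtain ⟨B, hB, hcard⟩ := exists_indep_lt_card_of_lt_matroidRk hlt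
  obtain ⟨x, -, hxS, hx⟩ := exch S B hS hB hcard
  exact ⟨x, mem_mCont.2 ⟨hxS, hx⟩⟩

theorem HasExchange.mCont_insert_subset_of_mem_mParClass (exch : HasExchange Indep)
    (hx : x ∈ mCont Indep S) (hy : y ∈ mParClass Indep S x) :
    mCont Indep (insert x S) ⊆ mCont Indep (insert y S) := by
  obtain ⟨hyS, hyx⟩ := Finset.mem_filter.1 hy
  rcases hyx with rfl | dep
  · rfl
  intro z hz
  obtain ⟨t, htT, htS, ht⟩ := exch (insert y S) (insert z (insert x S)) (mem_mCont.1 hyS).2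
    (mem_mCont.1 hz).2 (by
      rw [card_insert_of_mem_mCont hyS, card_insert_of_mem_mCont hz, card_insert_of_mem_mCont hx]
      exact Nat.lt_succ_self _)
  have t_eq : t = z := by
    rcases Finset.mem_insert.1 htT with rfl | htT
    · rfl
    rcases Finset.mem_insert.1 htT with rfl | htT
    · exact absurd (Finset.insert_comm y t S ▸ ht) dep
    · exact absurd (Finset.mem_insert_of_mem htT) htS
  exact t_eq ▸ mem_mCont.2 ⟨htS, ht⟩

namespace IsHereditary

theorem mem_mCont_insert_iff (her : IsHereditary Indep) :
    y ∈ mCont Indep (insert x S) ↔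
      y ∈ mCont Indep S ∧ y ≠ x ∧ Indep (insert y (insert x S)) := by
  simp only [mem_mCont, Finset.mem_insert, not_or]
  refine ⟨fun ⟨⟨hne, hS⟩, hI⟩ => ⟨⟨hS, her _ _ ?_ hI⟩, hne, hI⟩, fun ⟨⟨hS, _⟩, hne, hI⟩ =>
    ⟨⟨hne, hS⟩, hI⟩⟩
  exact Finset.insert_subset_insert _ (Finset.subset_insert _ _)

theorem mCont_insert_subset (her : IsHereditary Indep) :
    mCont Indep (insert x S) ⊆ mCont Indep S :=
  fun _ hy => (her.mem_mCont_insert_iff.1 hy).1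

theorem mem_mCont_insert_comm (her : IsHereditary Indep) :
    x ∈ mCont Indep S ∧ y ∈ mCont Indep (insert x S) ↔
      y ∈ mCont Indep S ∧ x ∈ mCont Indep (insert y S) := by
  rw [her.mem_mCont_insert_iff, her.mem_mCont_insert_iff, Finset.insert_comm, ne_comm]
  tauto

theorem mParClass_eq (her : IsHereditary Indep) :
    mParClass Indep S x = mCont Indep S \ mCont Indep (insert x S) := by
  ext y
  rw [mParClass, Finset.mem_filter, Finset.mem_sdiff, her.mem_mCont_insert_iff]
  tauto

theorem mem_mParClass_self (her : IsHereditary Indep) (hx : x ∈ mCont Indep S) :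
    x ∈ mParClass Indep S x := by
  simp [her.mParClass_eq, hx, mem_mCont]

theorem mem_mParClass_comm (her : IsHereditary Indep) (hx : x ∈ mCont Indep S)
    (hy : y ∈ mParClass Indep S x) : x ∈ mParClass Indep S y := by
  rw [her.mParClass_eq, Finset.mem_sdiff] at hy ⊢
  exact ⟨hx, fun h => hy.2 (her.mem_mCont_insert_comm.1 ⟨hy.1, h⟩).2⟩

theorem mCont_insert_eq (her : IsHereditary Indep) (exch : HasExchange Indep)
    (hx : x ∈ mCont Indep S) (hy : y ∈ mParClass Indep S x) :
    mCont Indep (insert y S) = mCont Indep (insert x S) :=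
  (exch.mCont_insert_subset_of_mem_mParClass (Finset.mem_of_mem_filter y hy)
    (her.mem_mParClass_comm hx hy)).antisymm (exch.mCont_insert_subset_of_mem_mParClass hx hy)

theorem mParClass_eq_iff (her : IsHereditary Indep) (exch : HasExchange Indep)
    (hx : x ∈ mCont Indep S) (hy : y ∈ mCont Indep S) :
    mParClass Indep S y = mParClass Indep S x ↔ y ∈ mParClass Indep S x := by
  refine ⟨fun h => h ▸ her.mem_mParClass_self hy, fun h => ?_⟩
  rw [her.mParClass_eq, her.mCont_insert_eq exch hx h, her.mParClass_eq]

theorem sum_mParClass (her : IsHereditary Indep) (f : X → ℝ) :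
    ∑ y ∈ mParClass Indep S x, f y =
      ∑ y ∈ mCont Indep S, f y - ∑ y ∈ mCont Indep (insert x S), f y := by
  rw [her.mParClass_eq, Finset.sum_sdiff_eq_sub her.mCont_insert_subset]

theorem sum_mParClasses (her : IsHereditary Indep) (exch : HasExchange Indep)
    (S : Finset X) (F : X → Finset X → ℝ) :
    ∑ C ∈ mParClasses Indep S, ∑ x ∈ C, F x C =
      ∑ x ∈ mCont Indep S, F x (mParClass Indep S x) := by
  refine Finset.sum_image' _ fun x hx => ?_
  have fiber : (mCont Indep S).filter (fun y => mParClass Indep S y = mParClass Indep S x) =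
      mParClass Indep S x := by
    ext y
    rw [Finset.mem_filter]
    exact ⟨fun ⟨hy, h⟩ => (her.mParClass_eq_iff exch hx hy).1 h, fun h =>
      have hy := Finset.mem_of_mem_filter y h
      ⟨hy, (her.mParClass_eq_iff exch hx hy).2 h⟩⟩
  rw [fiber]
  refine Finset.sum_congr rfl fun y hy => ?_
  rw [(her.mParClass_eq_iff exch hx (Finset.mem_of_mem_filter y hy)).2 hy]

theorem two_le_card_mParClasses (her : IsHereditary Indep) (exch : HasExchange Indep)
    (hS : Indep S) (hcard : S.card + 2 ≤ matroidRk Indep) :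
    2 ≤ (mParClasses Indep S).card := by
  obtain ⟨x, hx⟩ := exch.mCont_nonempty hS (by omega)
  obtain ⟨y, hy⟩ := exch.mCont_nonempty (mem_mCont.1 hx).2
    (by rw [card_insert_of_mem_mCont hx]; omega)
  have hyS := her.mCont_insert_subset hy
  refine Finset.one_lt_card.2 ⟨_, Finset.mem_image_of_mem _ hx, _, Finset.mem_image_of_mem _ hyS,
    fun h => ?_⟩
  have := h ▸ her.mem_mParClass_self hyS
  rw [her.mParClass_eq] at this
  exact (Finset.mem_sdiff.1 this).2 hy

theorem sum_indepFinset_insert (her : IsHereditary Indep) {G : Type*} [AddCommMonoid G] (k : ℕ)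
    (f : Finset X → G) :
    ∑ S ∈ indepFinset Indep k, ∑ x ∈ mCont Indep S, f (insert x S) =
      (k + 1) • ∑ T ∈ indepFinset Indep (k + 1), f T := by
  have marked : (k + 1) • ∑ T ∈ indepFinset Indep (k + 1), f T =
      ∑ T ∈ indepFinset Indep (k + 1), ∑ _x ∈ T, f T := by
    rw [Finset.smul_sum]
    refine Finset.sum_congr rfl fun T hT => ?_
    rw [Finset.sum_const, (mem_indepFinset.1 hT).2]
  rw [marked, Finset.sum_sigma', Finset.sum_sigma']
  refine Finset.sum_bij' (fun p _ => ⟨insert p.2 p.1, p.2⟩) (fun p _ => ⟨p.1.erase p.2, p.2⟩)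
    ?_ ?_ ?_ ?_ fun _ _ => rfl
  · rintro ⟨S, x⟩ hp
    obtain ⟨hS, hx⟩ := Finset.mem_sigma.1 hp
    exact Finset.mem_sigma.2 ⟨mem_indepFinset.2 ⟨(mem_mCont.1 hx).2, by
      rw [card_insert_of_mem_mCont hx, (mem_indepFinset.1 hS).2]⟩, Finset.mem_insert_self x S⟩
  · rintro ⟨T, x⟩ hp
    obtain ⟨hT, hx⟩ := Finset.mem_sigma.1 hp
    obtain ⟨hTI, hTcard⟩ := mem_indepFinset.1 hT
    refine Finset.mem_sigma.2 ⟨mem_indepFinset.2 ⟨her _ _ (T.erase_subset x) hTI, ?_⟩,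
      mem_mCont.2 ⟨T.notMem_erase x, ?_⟩⟩
    · rw [Finset.card_erase_of_mem hx, hTcard, Nat.add_sub_cancel]
    · rwa [Finset.insert_erase hx]
  · rintro ⟨S, x⟩ hp
    simp [Finset.erase_insert (mem_mCont.1 (Finset.mem_sigma.1 hp).2).1]
  · rintro ⟨T, x⟩ hp
    simp [Finset.insert_erase (Finset.mem_sigma.1 hp).2]

theorem sum_prod_smul_sum_mCont (her : IsHereditary Indep) {G : Type*} [AddCommMonoid G]
    [Module ℝ G] (ω : X → ℝ) (k : ℕ) (f : Finset X → G) :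
    ∑ S ∈ indepFinset Indep k, (∏ x ∈ S, ω x) • ∑ x ∈ mCont Indep S, ω x • f (insert x S) =
      (k + 1) • ∑ T ∈ indepFinset Indep (k + 1), (∏ x ∈ T, ω x) • f T := by
  rw [← her.sum_indepFinset_insert k fun T => (∏ x ∈ T, ω x) • f T]
  refine Finset.sum_congr rfl fun S _ => ?_
  rw [Finset.smul_sum]
  refine Finset.sum_congr rfl fun x hx => ?_
  rw [Finset.prod_insert (mem_mCont.1 hx).1, smul_smul, mul_comm]

theorem sum_mCont_eq_sum_mCont_insert (her : IsHereditary Indep)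
    {g : X → ℝ} (hg : ∀ y, x ∉ mCont Indep (insert y S) → g y = 0) :
    ∑ y ∈ mCont Indep S, g y = ∑ y ∈ mCont Indep (insert x S), g y :=
  (Finset.sum_subset her.mCont_insert_subset fun y _ hy =>
    hg y fun h => hy (her.mem_mCont_insert_comm.1 ⟨‹_›, h⟩).2).symm

end IsHereditary

theorem card_mParClasses_le_contNum (hS : Indep S) :
    (mParClasses Indep S).card ≤ contNum Indep S.card :=
  Finset.le_sup (f := fun S => (mParClasses Indep S).card) (mem_indepFinset.2 ⟨hS, rfl⟩)

omit [DecidableEq X] in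
theorem IsHereditary.indepFinset_nonempty (her : IsHereditary Indep)
    (hk : k < matroidRk Indep) : (indepFinset Indep k).Nonempty := by
  obtain ⟨B, hB, hcard⟩ := exists_indep_lt_card_of_lt_matroidRk hk
  obtain ⟨S, hSB, hS⟩ := Finset.exists_subset_card_eq hcard.le
  exact ⟨S, mem_indepFinset.2 ⟨her _ _ hSB hB, hS⟩⟩

theorem two_le_contNum (her : IsHereditary Indep) (exch : HasExchange Indep)
    (hk : k + 2 ≤ matroidRk Indep) : 2 ≤ contNum Indep k := by
  obtain ⟨S, hS⟩ := her.indepFinset_nonempty (by omega : k < matroidRk Indep)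
  obtain ⟨hSI, rfl⟩ := mem_indepFinset.1 hS
  exact (her.two_le_card_mParClasses exch hSI hk).trans (card_mParClasses_le_contNum hSI)

omit [DecidableEq X] in
theorem wNumIndep_pos (her : IsHereditary Indep) {ω : X → ℝ} (hω : ∀ x, 0 < ω x)
    (hk : k < matroidRk Indep) : 0 < wNumIndep Indep ω k :=
  Finset.sum_pos (fun _ _ => Finset.prod_pos fun x _ => hω x) (her.indepFinset_nonempty hk)

end Combinatorics

section Atlas

variable {Indep : Finset X → Prop} {S : Finset X} {x y : X} {ω : X → ℝ} {c : ℝ}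

/-- The basis vector of `(X → ℝ) × ℝ` indexed by an element `x` of the ground set. -/
def basisVec (x : X) : (X → ℝ) × ℝ := (Pi.single x 1, 0)

/-- The bilinear form attached to an independent set `S` at the bottom of the atlas. On the basis
vectors of `x, y ∈ Cnt(S)` it is `1` if `S ∪ {x, y}` has size `|S| + 2` and is independent, and `0`
otherwise; the extra coordinate pairs to `1` with each of them and to `c` with itself. -/
def localForm (Indep : Finset X → Prop) (c : ℝ) (S : Finset X) :
    LinearMap.BilinForm ℝ ((X → ℝ) × ℝ) :=
  LinearMap.mk₂ ℝ
    (fun v w => ∑ x ∈ mCont Indep S, v.1 x * (∑ y ∈ mCont Indep (insert x S), w.1 y + w.2) +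
      v.2 * (∑ x ∈ mCont Indep S, w.1 x + c * w.2))
    (fun _ _ _ => by simp only [Prod.fst_add, Prod.snd_add, Pi.add_apply, add_mul,
      Finset.sum_add_distrib]; ring)
    (fun _ _ _ => by simp only [Prod.smul_fst, Prod.smul_snd, Pi.smul_apply, smul_eq_mul, mul_assoc,
      ← Finset.mul_sum]; ring)
    (fun _ _ _ => by simp only [Prod.fst_add, Prod.snd_add, Pi.add_apply, mul_add,
      Finset.sum_add_distrib]; ring)
    (fun _ _ _ => by simp only [Prod.smul_fst, Prod.smul_snd, Pi.smul_apply, smul_eq_mul,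
      ← Finset.mul_sum, ← mul_add, mul_left_comm]; ring)

theorem localForm_apply (v w : (X → ℝ) × ℝ) : localForm Indep c S v w =
    ∑ x ∈ mCont Indep S, v.1 x * (∑ y ∈ mCont Indep (insert x S), w.1 y + w.2) +
      v.2 * (∑ x ∈ mCont Indep S, w.1 x + c * w.2) :=
  rfl

theorem localForm_snd (v : (X → ℝ) × ℝ) :
    localForm Indep c S (0, 1) v = ∑ x ∈ mCont Indep S, v.1 x + c * v.2 := by
  simp [localForm_apply]

theorem localForm_basisVec (hx : x ∈ mCont Indep S) (v : (X → ℝ) × ℝ) :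
    localForm Indep c S (basisVec x) v = ∑ y ∈ mCont Indep (insert x S), v.1 y + v.2 := by
  simp [localForm_apply, basisVec, Pi.single_apply, hx]

theorem localForm_basisVec_of_notMem (hx : x ∉ mCont Indep S) :
    localForm Indep c S (basisVec x) = 0 :=
  LinearMap.ext fun v => by simp [localForm_apply, basisVec, Pi.single_apply, hx]

theorem localForm_isSymm (her : IsHereditary Indep) : (localForm Indep c S).IsSymm := by
  refine ⟨fun v w => ?_⟩
  have swap : ∑ x ∈ mCont Indep S, ∑ y ∈ mCont Indep (insert x S), v.1 x * w.1 y =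
      ∑ x ∈ mCont Indep S, ∑ y ∈ mCont Indep (insert x S), w.1 x * v.1 y := by
    rw [Finset.sum_comm' fun x y => her.mem_mCont_insert_comm.trans and_comm]
    simp only [mul_comm]
  simp only [localForm_apply, mul_add, Finset.sum_add_distrib, Finset.mul_sum, swap,
    ← Finset.sum_mul]
  simp only [← Finset.mul_sum]
  ring

theorem localForm_eq_zero_iff (her : IsHereditary Indep) {v : (X → ℝ) × ℝ} :
    localForm Indep c S v = 0 ↔
      (∀ x ∈ mCont Indep S, ∑ y ∈ mCont Indep (insert x S), v.1 y + v.2 = 0) ∧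
        ∑ x ∈ mCont Indep S, v.1 x + c * v.2 = 0 := by
  constructor
  · intro hv
    have ker : ∀ w, localForm Indep c S w v = 0 := fun w => by
      rw [(localForm_isSymm her).eq, hv, LinearMap.zero_apply]
    exact ⟨fun x hx => localForm_basisVec hx v ▸ ker _, localForm_snd v ▸ ker _⟩
  · rintro ⟨rows, last⟩
    refine LinearMap.ext fun w => ?_
    rw [(localForm_isSymm her).eq, localForm_apply, last, Finset.sum_eq_zero fun x hx => by
      rw [rows x hx, mul_zero]]
    simp

theorem localForm_apply_self (her : IsHereditary Indep) (exch : HasExchange Indep)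
    (v : (X → ℝ) × ℝ) : localForm Indep c S v v =
      (∑ x ∈ mCont Indep S, v.1 x) ^ 2 - ∑ C ∈ mParClasses Indep S, (∑ x ∈ C, v.1 x) ^ 2 +
        2 * (∑ x ∈ mCont Indep S, v.1 x) * v.2 + c * v.2 ^ 2 := by
  have classes := her.sum_mParClasses exch S fun x C => v.1 x * ∑ y ∈ C, v.1 y
  simp only [her.sum_mParClass, ← Finset.sum_mul, mul_sub, Finset.sum_sub_distrib, ← sq] at classes
  rw [localForm_apply, classes]
  simp only [mul_add, Finset.sum_add_distrib, ← Finset.sum_mul]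
  ring

theorem localForm_isHyperbolicAt_snd (her : IsHereditary Indep) (exch : HasExchange Indep)
    (hc : 1 ≤ c) (hcS : (c - 1) * (mParClasses Indep S).card ≤ c) :
    IsHyperbolicAt (localForm Indep c S) (0, 1) := by
  intro v
  have total : ∑ C ∈ mParClasses Indep S, ∑ x ∈ C, v.1 x = ∑ x ∈ mCont Indep S, v.1 x :=
    her.sum_mParClasses exch S fun x _ => v.1 x
  have cauchy : (∑ x ∈ mCont Indep S, v.1 x) ^ 2 ≤
      (mParClasses Indep S).card * ∑ C ∈ mParClasses Indep S, (∑ x ∈ C, v.1 x) ^ 2 :=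
    total ▸ sq_sum_le_card_mul_sum_sq
  have nonneg : 0 ≤ ∑ C ∈ mParClasses Indep S, (∑ x ∈ C, v.1 x) ^ 2 :=
    Finset.sum_nonneg fun _ _ => sq_nonneg _
  rw [localForm_apply_self her exch, localForm_snd, localForm_snd]
  simp only [Pi.zero_apply, Finset.sum_const_zero, zero_add, mul_one]
  nlinarith [mul_le_mul_of_nonneg_left cauchy (sub_nonneg.2 hc),
    mul_le_mul_of_nonneg_right hcS nonneg]

theorem localForm_pos (exch : HasExchange Indep) (hω : ∀ x, 0 < ω x) (hS : Indep S)
    (hcard : S.card + 2 ≤ matroidRk Indep) : 0 < localForm Indep c S (ω, 0) (ω, 0) := by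
  simp only [localForm_apply, zero_mul, add_zero]
  refine Finset.sum_pos (fun x hx => mul_pos (hω x) (Finset.sum_pos (fun y _ => hω y) ?_))
    (exch.mCont_nonempty hS (by omega))
  exact exch.mCont_nonempty (mem_mCont.1 hx).2 (by rw [card_insert_of_mem_mCont hx]; omega)

theorem localForm_isHyperbolicAt (her : IsHereditary Indep) (exch : HasExchange Indep)
    (hω : ∀ x, 0 < ω x) (hS : Indep S) (hcard : S.card + 2 ≤ matroidRk Indep)
    (hc : 1 ≤ c) (hcS : (c - 1) * (mParClasses Indep S).card ≤ c) :
    IsHyperbolicAt (localForm Indep c S) (ω, 0) :=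
  (localForm_isHyperbolicAt_snd her exch hc hcS).of_pos (localForm_isSymm her)
    (by rw [localForm_snd]; simpa using zero_lt_one.trans_le hc) (localForm_pos exch hω hS hcard)

theorem localForm_eq_zero_iff_card_and_sum_eq (her : IsHereditary Indep)
    (exch : HasExchange Indep) {p s : ℝ} (hp : p ≠ 1) (hs : s ≠ 0) :
    localForm Indep (1 + 1 / (p - 1)) S (ω, -(s * (p - 1))) = 0 ↔
      (mParClasses Indep S).card = p ∧ ∀ C ∈ mParClasses Indep S, ∑ x ∈ C, ω x = s := by
  have hp' : p - 1 ≠ 0 := sub_ne_zero.2 hp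
  have last : (1 + 1 / (p - 1)) * -(s * (p - 1)) = -(s * p) := by field_simp; ring
  have total : ∑ C ∈ mParClasses Indep S, ∑ x ∈ C, ω x = ∑ x ∈ mCont Indep S, ω x :=
    her.sum_mParClasses exch S fun x _ => ω x
  have rows : (∀ x ∈ mCont Indep S, ∑ y ∈ mCont Indep (insert x S), ω y = s * (p - 1)) ↔
      ∀ C ∈ mParClasses Indep S, ∑ x ∈ C, ω x = ∑ x ∈ mCont Indep S, ω x - s * (p - 1) := by
    simp only [mParClasses, Finset.forall_mem_image, her.sum_mParClass, sub_right_inj]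
  simp only [localForm_eq_zero_iff her, last, add_neg_eq_zero]
  rw [rows]
  constructor
  · rintro ⟨classes, sum_eq⟩
    replace classes : ∀ C ∈ mParClasses Indep S, ∑ x ∈ C, ω x = s := fun C hC => by
      rw [classes C hC, sum_eq]; ring
    rw [Finset.sum_congr rfl classes, Finset.sum_const, nsmul_eq_mul, sum_eq, mul_comm] at total
    exact ⟨mul_left_cancel₀ hs total, classes⟩
  · rintro ⟨card, classes⟩
    rw [Finset.sum_congr rfl classes, Finset.sum_const, nsmul_eq_mul, card] at total
    refine ⟨fun C hC => ?_, ?_⟩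
    · rw [classes C hC, ← total]; ring
    · rw [← total, mul_comm]

theorem exists_forall_localForm_eq_zero_iff (her : IsHereditary Indep) (exch : HasExchange Indep)
    {p : ℝ} (hp : 1 < p) (k : ℕ) :
    (∃ a : ℝ, 0 < a ∧ ∀ S, Indep S → S.card = k →
        localForm Indep (1 + 1 / (p - 1)) S (ω, -a) = 0) ↔
      ∃ s : ℝ, 0 < s ∧ ∀ S, Indep S → S.card = k →
        (mParClasses Indep S).card = p ∧ ∀ C ∈ mParClasses Indep S, ∑ x ∈ C, ω x = s := by
  have pos : 0 < p - 1 := sub_pos.2 hp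
  constructor
  · rintro ⟨a, ha, h⟩
    refine ⟨a / (p - 1), div_pos ha pos, fun S hS hcard => ?_⟩
    rw [← localForm_eq_zero_iff_card_and_sum_eq her exch hp.ne' (div_pos ha pos).ne',
      div_mul_cancel₀ _ pos.ne']
    exact h S hS hcard
  · rintro ⟨s, hs, h⟩
    exact ⟨s * (p - 1), mul_pos hs pos, fun S hS hcard =>
      (localForm_eq_zero_iff_card_and_sum_eq her exch hp.ne' hs.ne').2 (h S hS hcard)⟩

/-- The bilinear form of height `n` at `S` in the atlas. It is `n!` times the sum of the forms
`localForm Indep c T` over the independent sets `T ⊇ S` of size `|S| + n`, each weighted by the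
product of `ω` over `T \ S`. -/
def atlasForm (Indep : Finset X → Prop) (ω : X → ℝ) (c : ℝ) :
    ℕ → Finset X → LinearMap.BilinForm ℝ ((X → ℝ) × ℝ)
  | 0, S => localForm Indep c S
  | n + 1, S => ∑ x ∈ mCont Indep S, ω x • atlasForm Indep ω c n (insert x S)

variable {n : ℕ}

theorem atlasForm_succ_apply (v w : (X → ℝ) × ℝ) :
    atlasForm Indep ω c (n + 1) S v w =
      ∑ x ∈ mCont Indep S, ω x * atlasForm Indep ω c n (insert x S) v w := by
  simp [atlasForm, LinearMap.sum_apply]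

theorem atlasForm_isSymm (her : IsHereditary Indep) :
    ∀ n S, (atlasForm Indep ω c n S).IsSymm
  | 0, _ => localForm_isSymm her
  | n + 1, S => ⟨fun v w => by
      simp only [atlasForm_succ_apply, (atlasForm_isSymm her n _).eq v w]⟩

theorem atlasForm_basisVec_of_notMem (her : IsHereditary Indep) :
    ∀ {n S}, x ∉ mCont Indep S → atlasForm Indep ω c n S (basisVec x) = 0
  | 0, _, hx => localForm_basisVec_of_notMem hx
  | n + 1, S, hx => LinearMap.ext fun v => by
      rw [atlasForm_succ_apply]
      refine Finset.sum_eq_zero fun y _ => ?_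
      rw [atlasForm_basisVec_of_notMem her fun h => hx (her.mCont_insert_subset h),
        LinearMap.zero_apply, mul_zero]

theorem atlasForm_succ_basisVec (her : IsHereditary Indep) (n : ℕ) (hx : x ∈ mCont Indep S)
    (v : (X → ℝ) × ℝ) : atlasForm Indep ω c (n + 1) S (basisVec x) v =
      atlasForm Indep ω c n (insert x S) (ω, 0) v := by
  induction n generalizing S with
  | zero =>
    rw [atlasForm_succ_apply, her.sum_mCont_eq_sum_mCont_insert (x := x) fun y hy => by
      rw [atlasForm_basisVec_of_notMem her hy, LinearMap.zero_apply, mul_zero]]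
    simp only [atlasForm, localForm_apply (ω, 0), zero_mul, add_zero]
    refine Finset.sum_congr rfl fun y hy => ?_
    rw [localForm_basisVec (her.mem_mCont_insert_comm.1 ⟨hx, hy⟩).2, Finset.insert_comm]
  | succ n ih =>
    rw [atlasForm_succ_apply, her.sum_mCont_eq_sum_mCont_insert (x := x) fun y hy => by
      rw [atlasForm_basisVec_of_notMem her hy, LinearMap.zero_apply, mul_zero],
      atlasForm_succ_apply]
    refine Finset.sum_congr rfl fun y hy => ?_
    rw [ih (her.mem_mCont_insert_comm.1 ⟨hx, hy⟩).2, Finset.insert_comm]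

theorem atlasForm_apply_nonneg (hω : ∀ x, 0 ≤ ω x) (hc : 0 ≤ c) {v w : (X → ℝ) × ℝ} (hv : 0 ≤ v)
    (hw : 0 ≤ w) : ∀ n S, 0 ≤ atlasForm Indep ω c n S v w
  | 0, S => add_nonneg
      (Finset.sum_nonneg fun x _ => mul_nonneg (hv.1 x)
        (add_nonneg (Finset.sum_nonneg fun y _ => hw.1 y) hw.2))
      (mul_nonneg hv.2 (add_nonneg (Finset.sum_nonneg fun y _ => hw.1 y) (mul_nonneg hc hw.2)))
  | n + 1, S => by
      rw [atlasForm_succ_apply]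
      exact Finset.sum_nonneg fun x _ =>
        mul_nonneg (hω x) (atlasForm_apply_nonneg hω hc hv hw n _)

omit [Fintype X] in
theorem basisVec_nonneg (x : X) : 0 ≤ basisVec x :=
  ⟨Pi.single_nonneg.2 zero_le_one, le_rfl⟩

theorem atlasForm_pos (exch : HasExchange Indep) (hω : ∀ x, 0 < ω x) :
    ∀ {n S}, Indep S → S.card + n + 2 ≤ matroidRk Indep →
      0 < atlasForm Indep ω c n S (ω, 0) (ω, 0)
  | 0, _, hS, hcard => localForm_pos exch hω hS hcard
  | n + 1, S, hS, hcard => by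
      rw [atlasForm_succ_apply]
      refine Finset.sum_pos (fun x hx => mul_pos (hω x) ?_) (exch.mCont_nonempty hS (by omega))
      exact atlasForm_pos exch hω (mem_mCont.1 hx).2
        (by rw [card_insert_of_mem_mCont hx]; omega)

theorem atlasForm_basisVec_pos (her : IsHereditary Indep) (exch : HasExchange Indep)
    (hω : ∀ x, 0 < ω x) (hcard : S.card + n + 2 ≤ matroidRk Indep) (hx : x ∈ mCont Indep S) :
    0 < atlasForm Indep ω c n S (basisVec x) (ω, 0) := by
  have hxI := (mem_mCont.1 hx).2
  have hxcard := card_insert_of_mem_mCont hx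
  cases n with
  | zero =>
    rw [atlasForm, localForm_basisVec hx, add_zero]
    exact Finset.sum_pos (fun y _ => hω y) (exch.mCont_nonempty hxI (by omega))
  | succ n =>
    rw [atlasForm_succ_basisVec her n hx]
    exact atlasForm_pos exch hω hxI (by omega)

theorem atlasForm_basisVec_basisVec_pos (her : IsHereditary Indep) (exch : HasExchange Indep)
    (hω : ∀ x, 0 < ω x) (hcard : S.card + n + 2 ≤ matroidRk Indep) (hx : x ∈ mCont Indep S)
    (hy : y ∈ mCont Indep (insert x S)) :
    0 < atlasForm Indep ω c n S (basisVec x) (basisVec y) := by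
  cases n with
  | zero =>
    rw [atlasForm, localForm_basisVec hx]
    simp [basisVec, hy]
  | succ n =>
    rw [atlasForm_succ_basisVec her n hx, (atlasForm_isSymm her n _).eq]
    exact atlasForm_basisVec_pos her exch hω (by rw [card_insert_of_mem_mCont hx]; omega) hy

theorem atlasForm_reflTransGen (her : IsHereditary Indep) (exch : HasExchange Indep)
    (hω : ∀ x, 0 < ω x) (hcard : S.card + n + 2 ≤ matroidRk Indep) (x y : mCont Indep S) :
    Relation.ReflTransGen (fun x y : mCont Indep S =>
      0 < atlasForm Indep ω c n S (basisVec x.1) (basisVec y.1)) x y := by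
  obtain ⟨⟨x, hx⟩, ⟨y, hy⟩⟩ := x, y
  by_cases hyx : y ∈ mCont Indep (insert x S)
  · exact .single (atlasForm_basisVec_basisVec_pos her exch hω hcard hx hyx)
  -- Parallel elements are linked through any further continuation, which they have in common.
  have parallel : y ∈ mParClass Indep S x := by
    rw [her.mParClass_eq]
    exact Finset.mem_sdiff.2 ⟨hy, hyx⟩
  obtain ⟨t, htx⟩ := exch.mCont_nonempty (mem_mCont.1 hx).2
    (by rw [card_insert_of_mem_mCont hx]; omega)
  have hty : t ∈ mCont Indep (insert y S) := her.mCont_insert_eq exch hx parallel ▸ htx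
  have link_x := atlasForm_basisVec_basisVec_pos (c := c) her exch hω hcard hx htx
  have link_y := atlasForm_basisVec_basisVec_pos (c := c) her exch hω hcard hy hty
  rw [(atlasForm_isSymm her n S).eq] at link_y
  exact .head (b := ⟨t, her.mCont_insert_subset htx⟩) link_x (.single link_y)

theorem atlasForm_isAtlasVertex (her : IsHereditary Indep) (exch : HasExchange Indep)
    (hω : ∀ x, 0 < ω x) (hcard : S.card + (n + 1) + 2 ≤ matroidRk Indep) :
    IsAtlasVertex (atlasForm Indep ω c (n + 1) S)
      (fun x : mCont Indep S => atlasForm Indep ω c n (insert x.1 S)) (fun x => ω x.1) (ω, 0)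
      (fun x => basisVec x.1) where
  isSymm := atlasForm_isSymm her _ _
  eq_sum := (Finset.sum_coe_sort _ fun x => ω x • atlasForm Indep ω c n (insert x S)).symm
  apply_eq x := atlasForm_succ_basisVec her n x.2
  weight_pos x := hω x
  local_pos x := atlasForm_pos exch hω (mem_mCont.1 x.2).2
    (by rw [card_insert_of_mem_mCont x.2]; omega)

theorem atlasForm_isHyperbolicAt (her : IsHereditary Indep) (exch : HasExchange Indep)
    (hω : ∀ x, 0 < ω x) (hc : 1 ≤ c) {q : ℕ} (hq : q + 2 ≤ matroidRk Indep)
    (hcq : (c - 1) * contNum Indep q ≤ c) (hS : Indep S) (hn : S.card + n = q) :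
    IsHyperbolicAt (atlasForm Indep ω c n S) (ω, 0) := by
  induction n generalizing S with
  | zero =>
    obtain rfl : S.card = q := hn
    refine localForm_isHyperbolicAt her exch hω hS hq hc (le_trans ?_ hcq)
    exact mul_le_mul_of_nonneg_left (Nat.cast_le.2 (card_mParClasses_le_contNum hS))
      (sub_nonneg.2 hc)
  | succ n ih =>
    have : Nonempty (mCont Indep S) := (exch.mCont_nonempty hS (by omega)).to_subtype
    refine (atlasForm_isAtlasVertex her exch hω (by omega)).isHyperbolicAt
      (fun x => ih (mem_mCont.1 x.2).2 (by rw [card_insert_of_mem_mCont x.2]; omega))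
      (fun x y => ?_) (atlasForm_reflTransGen her exch hω (by omega))
    exact atlasForm_apply_nonneg (fun x => (hω x).le) (zero_le_one.trans hc) (basisVec_nonneg _)
      (basisVec_nonneg _) _ _

theorem atlasForm_eq_zero_iff (her : IsHereditary Indep) (exch : HasExchange Indep)
    (hω : ∀ x, 0 < ω x) (hc : 1 ≤ c) {q : ℕ} (hq : q + 2 ≤ matroidRk Indep)
    (hcq : (c - 1) * contNum Indep q ≤ c) {v : (X → ℝ) × ℝ} (hS : Indep S)
    (hn : S.card + n = q) : atlasForm Indep ω c n S v = 0 ↔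
      ∀ T, S ⊆ T → Indep T → T.card = q → localForm Indep c T v = 0 := by
  induction n generalizing S with
  | zero =>
    refine ⟨fun h T hST _ hT => ?_, fun h => h S subset_rfl hS hn⟩
    rwa [← Finset.eq_of_subset_of_card_le hST (by omega)]
  | succ n ih =>
    have hn' : ∀ x : mCont Indep S, (insert x.1 S).card + n = q := fun x => by
      rw [card_insert_of_mem_mCont x.2]; omega
    have hI : ∀ x : mCont Indep S, Indep (insert x.1 S) := fun x => (mem_mCont.1 x.2).2
    rw [(atlasForm_isAtlasVertex her exch hω (by omega)).eq_zero_iff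
      (fun x => atlasForm_isHyperbolicAt her exch hω hc hq hcq (hI x) (hn' x))
      (fun x => atlasForm_isSymm her _ _)]
    simp only [fun x => ih (hI x) (hn' x)]
    refine ⟨fun h T hST hT hTq => ?_, fun h x T hT => h T ((Finset.subset_insert _ _).trans hT)⟩
    obtain ⟨x, hxT, hxS⟩ := Finset.exists_mem_notMem_of_card_lt_card (by omega : S.card < T.card)
    have hins := Finset.insert_subset hxT hST
    exact h ⟨x, mem_mCont.2 ⟨hxS, her _ _ hins hT⟩⟩ T hins hT hTq

theorem sum_prod_smul_atlasForm (her : IsHereditary Indep) (n j : ℕ) :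
    ∑ S ∈ indepFinset Indep j, (∏ x ∈ S, ω x) • atlasForm Indep ω c n S =
      (j + 1).ascFactorial n •
        ∑ T ∈ indepFinset Indep (j + n), (∏ x ∈ T, ω x) • localForm Indep c T := by
  induction n generalizing j with
  | zero => simp [atlasForm]
  | succ n ih =>
    simp only [atlasForm]
    rw [her.sum_prod_smul_sum_mCont, ih, smul_smul, Nat.succ_ascFactorial,
      ← Nat.ascFactorial_succ, Nat.add_right_comm, Nat.add_assoc]

theorem atlasForm_empty_apply (her : IsHereditary Indep) (empty : Indep ∅) (q : ℕ)
    (v w : (X → ℝ) × ℝ) : atlasForm Indep ω c q ∅ v w =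
      q.factorial * ∑ T ∈ indepFinset Indep q, (∏ x ∈ T, ω x) * localForm Indep c T v w := by
  have sum_eq := sum_prod_smul_atlasForm (ω := ω) (c := c) her q 0
  have only_empty : indepFinset Indep 0 = {∅} := by
    ext S
    rw [mem_indepFinset, Finset.card_eq_zero, Finset.mem_singleton]
    exact and_iff_right_of_imp fun h => h ▸ empty
  rw [only_empty, Finset.sum_singleton, Finset.prod_empty, one_smul, zero_add, zero_add,
    Nat.one_ascFactorial] at sum_eq
  simp [sum_eq, LinearMap.sum_apply]

theorem sum_prod_mul_sum_mCont (her : IsHereditary Indep) (k : ℕ) :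
    ∑ S ∈ indepFinset Indep k, (∏ x ∈ S, ω x) * ∑ x ∈ mCont Indep S, ω x =
      (k + 1) * wNumIndep Indep ω (k + 1) := by
  simpa [wNumIndep, indepFinset] using her.sum_prod_smul_sum_mCont ω k fun _ => (1 : ℝ)

theorem atlasForm_empty_snd_snd (her : IsHereditary Indep) (empty : Indep ∅) (q : ℕ) :
    atlasForm Indep ω c q ∅ (0, 1) (0, 1) = q.factorial * (c * wNumIndep Indep ω q) := by
  simp [atlasForm_empty_apply her empty, localForm_snd, wNumIndep, indepFinset, mul_comm c,
    Finset.sum_mul]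

theorem atlasForm_empty_ref_snd (her : IsHereditary Indep) (empty : Indep ∅) (q : ℕ) :
    atlasForm Indep ω c q ∅ (ω, 0) (0, 1) =
      q.factorial * ((q + 1) * wNumIndep Indep ω (q + 1)) := by
  rw [(atlasForm_isSymm her _ _).eq, atlasForm_empty_apply her empty]
  simp only [localForm_snd, mul_zero, add_zero, sum_prod_mul_sum_mCont her]

theorem atlasForm_empty_ref_ref (her : IsHereditary Indep) (empty : Indep ∅) (q : ℕ) :
    atlasForm Indep ω c q ∅ (ω, 0) (ω, 0) =
      q.factorial * ((q + 1) * ((q + 2) * wNumIndep Indep ω (q + 2))) := by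
  rw [atlasForm_empty_apply her empty]
  simp only [localForm_apply, zero_mul, add_zero]
  have first := her.sum_prod_smul_sum_mCont ω q fun S => ∑ y ∈ mCont Indep S, ω y
  simp only [smul_eq_mul, nsmul_eq_mul] at first
  rw [first, sum_prod_mul_sum_mCont her]
  push_cast
  ring

theorem wNumIndep_sq_eq_iff (her : IsHereditary Indep) (empty : Indep ∅) (q : ℕ) :
    wNumIndep Indep ω (q + 1) ^ 2 =
        (1 + 1 / ((q + 1 : ℕ) : ℝ)) * c * wNumIndep Indep ω q * wNumIndep Indep ω (q + 1 + 1) ↔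
      atlasForm Indep ω c q ∅ (0, 1) (0, 1) * atlasForm Indep ω c q ∅ (ω, 0) (ω, 0) =
        atlasForm Indep ω c q ∅ (ω, 0) (0, 1) ^ 2 := by
  rw [atlasForm_empty_snd_snd her empty, atlasForm_empty_ref_snd her empty,
    atlasForm_empty_ref_ref her empty]
  have scale : (q.factorial * (q + 1) : ℝ) ^ 2 ≠ 0 := by positivity
  rw [eq_comm, ← mul_right_inj' scale]
  push_cast
  field_simp
  ring_nf

theorem wNumIndep_sq_eq_iff_exists_localForm_eq_zero (her : IsHereditary Indep)
    (exch : HasExchange Indep) (empty : Indep ∅) (hω : ∀ x, 0 < ω x) (hc : 1 ≤ c) {q : ℕ}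
    (hq : q + 2 ≤ matroidRk Indep) (hcq : (c - 1) * contNum Indep q ≤ c) :
    wNumIndep Indep ω (q + 1) ^ 2 =
        (1 + 1 / ((q + 1 : ℕ) : ℝ)) * c * wNumIndep Indep ω q * wNumIndep Indep ω (q + 1 + 1) ↔
      ∃ a : ℝ, 0 < a ∧ ∀ S, Indep S → S.card = q → localForm Indep c S (ω, -a) = 0 := by
  have card : (∅ : Finset X).card + q = q := by rw [Finset.card_empty, zero_add]
  have pos : 0 < atlasForm Indep ω c q ∅ (ω, 0) (ω, 0) :=
    atlasForm_pos exch hω empty (by rwa [card])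
  have pos_snd : 0 < atlasForm Indep ω c q ∅ (ω, 0) (0, 1) := by
    rw [atlasForm_empty_ref_snd her empty]
    have := wNumIndep_pos her hω (by omega : q + 1 < matroidRk Indep)
    positivity
  have hyp := atlasForm_isHyperbolicAt her exch hω hc hq hcq empty card
  rw [wNumIndep_sq_eq_iff her empty, hyp.mul_eq_sq_iff (atlasForm_isSymm her _ _) pos pos_snd]
  refine exists_congr fun a => and_congr_right fun _ => ?_
  have vec : ((ω, 0) : (X → ℝ) × ℝ) - a • (0, 1) = (ω, -a) := by simp
  rw [vec, atlasForm_eq_zero_iff her exch hω hc hq hcq empty card]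
  simp only [Finset.empty_subset, forall_const]

end Atlas

/-- **Refined equality conditions for matroids.** Equality holds in the refined weighted
log-concavity inequality if and only if there is `s > 0` such that every independent set `S`
of size `k-1` satisfies `|Par(S)| = p(k-1)` and every parallel class of `S` has total
weight `s`. -/
theorem matroid_refined_equality
    (Indep : Finset X → Prop)
    (h_ne : ∃ S : Finset X, Indep S)
    (h_hered : ∀ S T : Finset X, S ⊆ T → Indep T → Indep S)
    (h_exch : ∀ S T : Finset X, Indep S → Indep T → S.card < T.card →
      ∃ x ∈ T, x ∉ S ∧ Indep (insert x S))
    (ω : X → ℝ) (hω : ∀ x, 0 < ω x)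
    (k : ℕ) (hk1 : 1 ≤ k) (hk2 : k < matroidRk Indep) :
    (wNumIndep Indep ω k) ^ 2 =
        ((1 : ℝ) + 1 / (k : ℝ)) * (1 + 1 / ((contNum Indep (k - 1) : ℝ) - 1)) *
          wNumIndep Indep ω (k - 1) * wNumIndep Indep ω (k + 1) ↔
      ∃ s : ℝ, 0 < s ∧ ∀ S : Finset X, Indep S → S.card = k - 1 →
        (mParClasses Indep S).card = contNum Indep (k - 1) ∧
        ∀ C ∈ mParClasses Indep S, (∑ x ∈ C, ω x) = s := by
  have her : IsHereditary Indep := h_hered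
  have exch : HasExchange Indep := h_exch
  obtain ⟨q, rfl⟩ := Nat.exists_eq_add_of_le' hk1
  have empty : Indep ∅ := h_ne.elim fun S hS => her _ _ S.empty_subset hS
  have one_lt : (1 : ℝ) < contNum Indep q := by exact_mod_cast two_le_contNum her exch hk2
  have pos : (0 : ℝ) < contNum Indep q - 1 := sub_pos.2 one_lt
  have hc : (1 : ℝ) ≤ 1 + 1 / (contNum Indep q - 1) := le_add_of_nonneg_right (by positivity)
  have hcq : (1 + 1 / (contNum Indep q - 1) - 1) * contNum Indep q ≤
      (1 + 1 / (contNum Indep q - 1) : ℝ) := le_of_eq (by field_simp; ring)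
  rw [Nat.add_sub_cancel,
    wNumIndep_sq_eq_iff_exists_localForm_eq_zero her exch empty hω hc hk2 hcq,
    exists_forall_localForm_eq_zero_iff her exch one_lt]
  simp only [Nat.cast_inj]
end
end

section
/- Let D = ([n], J) be a discrete polymatroid, let ω : [n] → ℝ_{>0} be a positive weight function, let t ∈ [0,1], and let k be an integer with 1 ≤ k < rk(D); assume p(k−1) − 1 + t > 0 (which is automatic when t > 0). Then J_{ω,t}(k)² ≥ (1 + 1/k)·(1 + (1 − t)/(p(k−1) − 1 + t))·J_{ω,t}(k−1)·J_{ω,t}(k+1). -/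
open scoped Classical BigOperators

noncomputable section

variable {n : ℕ}

/-- The rank of a discrete polymatroid: the maximal size `|a| = a_1 + … + a_n` of an
independent multiset. -/
def polyRk (J : Finset (Fin n → ℕ)) : ℕ := J.sup (fun a => ∑ i, a i)

/-- The independent multisets of size `k`. -/
def polySize (J : Finset (Fin n → ℕ)) (k : ℕ) : Finset (Fin n → ℕ) :=
  J.filter (fun a => (∑ i, a i) = k)

/-- The set of continuations of `a`. -/
def pCont (J : Finset (Fin n → ℕ)) (a : Fin n → ℕ) : Finset (Fin n) :=
  Finset.univ.filter (fun i => a + Pi.single i 1 ∈ J)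

/-- The parallel class of `i ∈ Cnt(a)`:  the set of continuations `j` with `j ∼_a i`, i.e.
`j = i` or `a + e_i + e_j ∉ J`. -/
def pParClass (J : Finset (Fin n → ℕ)) (a : Fin n → ℕ) (i : Fin n) : Finset (Fin n) :=
  (pCont J a).filter (fun j => j = i ∨ a + Pi.single i 1 + Pi.single j 1 ∉ J)

/-- The set `Par(a)` of parallel classes of `a`. -/
def pParClasses (J : Finset (Fin n → ℕ)) (a : Fin n → ℕ) : Finset (Finset (Fin n)) :=
  (pCont J a).image (pParClass J a)

/-- The `k`-continuation number `p(k)` of a discrete polymatroid. -/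
def pContNum (J : Finset (Fin n → ℕ)) (k : ℕ) : ℕ :=
  (polySize J k).sup (fun a => (pParClasses J a).card)

/-- The weighted count `J_{ω,t}(k) = Σ_{a ∈ J_k} t^{π(a)}·ω(a)/a!`, where
`π(a) = Σ_i a_i (a_i - 1)/2`, `ω(a) = Π_i ω(i)^{a_i}` and `a! = Π_i a_i!`. -/
def Jwt (J : Finset (Fin n → ℕ)) (ω : Fin n → ℝ) (t : ℝ) (k : ℕ) : ℝ :=
  ∑ a ∈ polySize J k,
    t ^ (∑ i, Nat.choose (a i) 2) * (∏ i, ω i ^ a i) / (∏ i, ((a i).factorial : ℝ))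

/-- The weighted count `J_ω(k) = Σ_{a ∈ J_k} ω(a)/a!`. -/
def Jw (J : Finset (Fin n → ℕ)) (ω : Fin n → ℝ) (k : ℕ) : ℝ :=
  ∑ a ∈ polySize J k, (∏ i, ω i ^ a i) / (∏ i, ((a i).factorial : ℝ))

/-!
The weighted counts are, up to factorials, the values of a linear functional on the powers of the
linear form `ℓ = ∑ i, ω i • X i`, and the inequality is a reverse Cauchy–Schwarz inequality for the
Hessian form of that functional in the direction `ℓ ^ m`. It is proved for all directions
`X ^ b * ℓ ^ m` with `|b| + m = k` by induction on `m`.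

For `m = 0` the Hessian at `b` is, after scaling the variables, the all-ones matrix corrected inside
each parallel class of `b`, and Cauchy–Schwarz over the parallel classes applies. For the inductive
step, the form `B` at `X ^ b * ℓ ^ (m + 1)` is the `ω`-weighted sum of the forms at the
continuations of `b`, which gives `B x x ≤ ∑ i, B (e i) x ^ 2 / B (e i) w`, where `e i` are scaled
coordinate vectors and `w = ∑ i, e i`. The matrix `B (e i) (e j)` is the adjacency matrix of a
connected weighted graph, so if `B x w = 0` the Poisson equation on this graph has a solution with
right-hand side `B (e i) x`; translating `x` by the solution turns the bound into `B x x ≤ 0`.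

All Hessian entries are positive only for `0 < t`; the case `t = 0` follows by continuity.
-/

section BilinearForms

variable {V : Type*} [AddCommGroup V] [Module ℝ V] {B : LinearMap.BilinForm ℝ V}

/-- The reverse Cauchy–Schwarz inequality of `B` at `w`. When `0 < B w w` it says that `B` is
negative semidefinite on the orthogonal complement of `w`, i.e. that `B` has Lorentzian
signature; this is the property propagated through the induction. -/
def ReverseCauchySchwarz (B : LinearMap.BilinForm ℝ V) (w : V) : Prop :=
  ∀ x, B x x * B w w ≤ B x w ^ 2

theorem mul_self_le_sq_of_sub_smul_nonpos (hB : B.IsSymm) {x w : V} (hw : 0 ≤ B w w) (l : ℝ)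
    (hl : B (x - l • w) (x - l • w) ≤ 0) : B x x * B w w ≤ B x w ^ 2 := by
  have expand : B (x - l • w) (x - l • w) = B x x - 2 * l * B x w + l ^ 2 * B w w := by
    simp only [map_sub, map_smul, LinearMap.sub_apply, LinearMap.smul_apply, smul_eq_mul,
      hB.eq w x]
    ring
  nlinarith [sq_nonneg (l * B w w - B x w), mul_nonneg hw (neg_nonneg.2 hl)]

theorem reverseCauchySchwarz_of_orthogonal_nonpos (hB : B.IsSymm) {w : V} (hw : 0 ≤ B w w)
    (horth : ∀ x, B x w = 0 → B x x ≤ 0) : ReverseCauchySchwarz B w := by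
  intro x
  rcases hw.eq_or_lt with hw0 | hwpos
  · rw [← hw0, mul_zero]
    exact sq_nonneg _
  · refine mul_self_le_sq_of_sub_smul_nonpos hB hw (B x w / B w w) (horth _ ?_)
    simp [div_mul_cancel₀ _ hwpos.ne']

theorem ReverseCauchySchwarz.of_pos (hB : B.IsSymm) {z w : V} (hz : ReverseCauchySchwarz B z)
    (hzpos : 0 < B z z) (hw : 0 ≤ B w w) : ReverseCauchySchwarz B w := by
  intro x
  rcases hw.eq_or_lt with hw0 | hwpos
  · rw [← hw0, mul_zero]
    exact sq_nonneg _
  · have hwz : B w z ≠ 0 := fun h => by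
      have := hz w
      rw [h] at this
      nlinarith [mul_pos hwpos hzpos]
    refine mul_self_le_sq_of_sub_smul_nonpos hB hw (B x z / B w z) ?_
    have h := hz (x - (B x z / B w z) • w)
    have horth : B (x - (B x z / B w z) • w) z = 0 := by
      simp [div_mul_cancel₀ _ hwz]
    rw [horth, zero_pow two_ne_zero] at h
    exact nonpos_of_mul_nonpos_left h hzpos

end BilinearForms

section Laplacian

variable {ι : Type*} [Fintype ι]

theorem exists_mulVec_eq_of_isHermitian {M : Matrix ι ι ℝ} (hM : M.IsHermitian) {y : ι → ℝ}
    (hy : ∀ z, M.mulVec z = 0 → z ⬝ᵥ y = 0) : ∃ a, M.mulVec a = y := by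
  have hT := Matrix.isSymmetric_toEuclideanLin_iff.2 hM
  have hmem : WithLp.toLp 2 y ∈ LinearMap.range (Matrix.toEuclideanLin M) := by
    rw [← Submodule.orthogonal_orthogonal (LinearMap.range _), hT.orthogonal_range,
      Submodule.mem_orthogonal]
    intro z hz
    have := hy z.ofLp (congrArg WithLp.ofLp (LinearMap.mem_ker.1 hz))
    simpa [EuclideanSpace.inner_eq_star_dotProduct, dotProduct_comm] using this
  obtain ⟨a, ha⟩ := hmem
  exact ⟨a.ofLp, congrArg WithLp.ofLp ha⟩

variable {A : ι → ι → ℝ}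

theorem sum_mul_laplacian (hA : ∀ i j, A i j = A j i) (a : ι → ℝ) :
    ∑ i, a i * ∑ j, A i j * (a i - a j) = (∑ i, ∑ j, A i j * (a i - a j) ^ 2) / 2 := by
  have hswap : ∑ i, ∑ j, a i * (A i j * (a i - a j)) = ∑ i, ∑ j, a j * (A i j * (a j - a i)) := by
    rw [Finset.sum_comm]
    exact Finset.sum_congr rfl fun i _ => Finset.sum_congr rfl fun j _ => by rw [hA j i]
  rw [eq_div_iff two_ne_zero, mul_two]
  simp only [Finset.mul_sum]
  nth_rw 2 [hswap]
  simp only [← Finset.sum_add_distrib]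
  exact Finset.sum_congr rfl fun i _ => Finset.sum_congr rfl fun j _ => by ring

theorem sum_mul_laplacian_nonneg (hA : ∀ i j, A i j = A j i) (hA0 : ∀ i j, 0 ≤ A i j) (a : ι → ℝ) :
    0 ≤ ∑ i, a i * ∑ j, A i j * (a i - a j) := by
  rw [sum_mul_laplacian hA]
  exact div_nonneg (Finset.sum_nonneg fun i _ => Finset.sum_nonneg fun j _ =>
    mul_nonneg (hA0 i j) (sq_nonneg _)) zero_le_two

theorem eq_of_laplacian_eq_zero (hA : ∀ i j, A i j = A j i) (hA0 : ∀ i j, 0 ≤ A i j)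
    (hconn : ∀ i j, Relation.ReflTransGen (fun i j => 0 < A i j) i j) {a : ι → ℝ}
    (ha : ∀ i, ∑ j, A i j * (a i - a j) = 0) (i j : ι) : a i = a j := by
  have hterm : ∀ i j, 0 ≤ A i j * (a i - a j) ^ 2 := fun i j => mul_nonneg (hA0 i j) (sq_nonneg _)
  have henergy : ∑ i, ∑ j, A i j * (a i - a j) ^ 2 = 0 := by
    have h := sum_mul_laplacian hA a
    simp only [ha, mul_zero, Finset.sum_const_zero] at h
    linarith
  have hedge : ∀ i j, 0 < A i j → a i = a j := by
    intro i j hij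
    rw [Fintype.sum_eq_zero_iff_of_nonneg
      (fun i => Finset.sum_nonneg fun j _ => hterm i j)] at henergy
    have hrow := congrFun henergy i
    rw [Pi.zero_apply, Finset.sum_eq_zero_iff_of_nonneg fun j _ => hterm i j] at hrow
    have := (mul_eq_zero.1 (hrow j (Finset.mem_univ j))).resolve_left hij.ne'
    exact sub_eq_zero.1 (pow_eq_zero_iff two_ne_zero |>.1 this)
  induction hconn i j with
  | refl => rfl
  | tail _ hstep ih => exact ih.trans (hedge _ _ hstep)

theorem exists_laplacian_eq (hA : ∀ i j, A i j = A j i) (hA0 : ∀ i j, 0 ≤ A i j)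
    (hconn : ∀ i j, Relation.ReflTransGen (fun i j => 0 < A i j) i j) {y : ι → ℝ}
    (hy : ∑ i, y i = 0) : ∃ a : ι → ℝ, ∀ i, ∑ j, A i j * (a i - a j) = y i := by
  let L : Matrix ι ι ℝ := Matrix.diagonal (fun i => ∑ j, A i j) - Matrix.of A
  have hL : ∀ a i, L.mulVec a i = ∑ j, A i j * (a i - a j) := fun a i => by
    simp only [L, Matrix.sub_mulVec, Matrix.mulVec_diagonal, Pi.sub_apply, mul_sub,
      Finset.sum_sub_distrib, Finset.sum_mul]
    rfl
  have hLsymm : L.IsHermitian :=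
    (Matrix.isHermitian_diagonal _).sub (Matrix.IsHermitian.ext fun i j => hA j i)
  obtain ⟨a, ha⟩ := exists_mulVec_eq_of_isHermitian hLsymm (y := y) fun z hz => by
    have hconst := eq_of_laplacian_eq_zero hA hA0 hconn (a := z) fun i => by rw [← hL, hz]; rfl
    rcases isEmpty_or_nonempty ι with _ | ⟨⟨i₀⟩⟩
    · simp [dotProduct]
    · simp_rw [dotProduct, fun i => hconst i i₀, ← Finset.mul_sum, hy, mul_zero]
  exact ⟨a, fun i => by rw [← hL, ha]⟩

variable {V : Type*} [AddCommGroup V] [Module ℝ V] {B : LinearMap.BilinForm ℝ V}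

theorem reverseCauchySchwarz_of_le_sum (hB : B.IsSymm) {e : ι → V} {w : V}
    (hw : ∀ x, B w x = ∑ i, B (e i) x) (he0 : ∀ i j, 0 ≤ B (e i) (e j))
    (hconn : ∀ i j, Relation.ReflTransGen (fun i j => 0 < B (e i) (e j)) i j)
    (hdeg : ∀ i, B (e i) w ≠ 0)
    (hpull : ∀ x, B x x ≤ ∑ i, B (e i) x ^ 2 / B (e i) w) : ReverseCauchySchwarz B w := by
  have hdegree : ∀ i, B (e i) w = ∑ j, B (e i) (e j) := fun i => by
    rw [hB.eq, hw]
    exact Finset.sum_congr rfl fun j _ => hB.eq _ _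
  have hww : 0 ≤ B w w := by
    simp only [hw w, hdegree]
    exact Finset.sum_nonneg fun i _ => Finset.sum_nonneg fun j _ => he0 i j
  refine reverseCauchySchwarz_of_orthogonal_nonpos hB hww fun x hx => ?_
  have hesymm : ∀ i j, B (e i) (e j) = B (e j) (e i) := fun i j => hB.eq _ _
  obtain ⟨a, ha⟩ := exists_laplacian_eq hesymm he0 hconn (y := fun i => B (e i) x)
    (by rw [← hw, hB.eq, hx])
  set v := ∑ i, a i • e i with hv
  have hBv : ∀ y, B v y = ∑ i, a i * B (e i) y := fun y => by
    simp [hv]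
  -- By the choice of `a`, the bound `hpull` at `x + v` involves only `a` and the degrees.
  have hxv : ∀ i, B (e i) (x + v) = a i * B (e i) w := fun i => by
    rw [map_add, ← ha i, hB.eq (e i) v, hBv, hdegree, Finset.mul_sum, ← Finset.sum_add_distrib]
    exact Finset.sum_congr rfl fun j _ => by rw [hesymm j i]; ring
  have hle : B (x + v) (x + v) ≤ B v (x + v) := by
    refine (hpull _).trans_eq ?_
    rw [hBv]
    refine Finset.sum_congr rfl fun i _ => ?_
    rw [hxv]
    field_simp [hdeg i]
  have hvx : 0 ≤ B v x := by
    rw [hBv]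
    simpa only [ha] using sum_mul_laplacian_nonneg hesymm he0 a
  simp only [map_add, LinearMap.add_apply] at hle
  linarith [hB.eq x v]

end Laplacian

section Polymatroid

/-- `J` is the family of independent multisets of a discrete polymatroid on `Fin n`. -/
structure IsDiscretePolymatroid (J : Finset (Fin n → ℕ)) : Prop where
  nonempty : J.Nonempty
  hereditary : ∀ a ∈ J, ∀ b : Fin n → ℕ, b ≤ a → b ∈ J
  exchange : ∀ a ∈ J, ∀ b ∈ J, (∑ i, a i) < (∑ i, b i) →
    ∃ i : Fin n, a i < b i ∧ a + Pi.single i 1 ∈ J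

theorem sum_add_single (a : Fin n → ℕ) (i : Fin n) :
    ∑ j, (a + Pi.single i 1 : Fin n → ℕ) j = (∑ j, a j) + 1 := by
  simp [Finset.sum_add_distrib]

theorem sum_choose_two_add_single (a : Fin n → ℕ) (i : Fin n) :
    ∑ j, Nat.choose ((a + Pi.single i 1 : Fin n → ℕ) j) 2 = (∑ j, Nat.choose (a j) 2) + a i := by
  rw [← Finset.add_sum_erase _ _ (Finset.mem_univ i),
    ← Finset.add_sum_erase _ (fun j => Nat.choose (a j) 2) (Finset.mem_univ i),
    Finset.sum_congr rfl fun j hj => by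
      rw [Pi.add_apply, Pi.single_eq_of_ne (Finset.ne_of_mem_erase hj), add_zero]]
  simp only [Pi.add_apply, Pi.single_eq_same, Nat.choose_succ_succ, Nat.choose_one_right]
  ring

variable {J : Finset (Fin n → ℕ)} {a b : Fin n → ℕ} {i j l : Fin n}

theorem mem_pCont : i ∈ pCont J b ↔ b + Pi.single i 1 ∈ J := by
  simp [pCont]

namespace IsDiscretePolymatroid

theorem mem_of_add_mem (hJ : IsDiscretePolymatroid J) (h : a + b ∈ J) : a ∈ J :=
  hJ.hereditary _ h _ le_self_add

theorem zero_mem (hJ : IsDiscretePolymatroid J) : 0 ∈ J :=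
  let ⟨a, ha⟩ := hJ.nonempty
  hJ.hereditary a ha 0 fun _ => Nat.zero_le _

theorem exists_add_single_mem (hJ : IsDiscretePolymatroid J) (ha : a ∈ J)
    (hlt : ∑ i, a i < polyRk J) : ∃ i, a + Pi.single i 1 ∈ J := by
  obtain ⟨b, hb, hab⟩ := (Finset.lt_sup_iff).1 hlt
  obtain ⟨i, -, hi⟩ := hJ.exchange a ha b hb hab
  exact ⟨i, hi⟩

theorem add_single_mem_of_parallel (hJ : IsDiscretePolymatroid J) (hj : b + Pi.single j 1 ∈ J)
    (hij : b + Pi.single i 1 + Pi.single j 1 ∉ J) (hil : b + Pi.single i 1 + Pi.single l 1 ∈ J) :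
    b + Pi.single j 1 + Pi.single l 1 ∈ J := by
  obtain ⟨x, hx, hxJ⟩ := hJ.exchange _ hj _ hil (by simp only [sum_add_single]; omega)
  have hxil : x = i ∨ x = l := by
    by_contra! hne
    simp [hne.1, hne.2] at hx
  rcases hxil with rfl | rfl
  · exact absurd (by rwa [add_right_comm] at hxJ) hij
  · exact hxJ

theorem add_single_twice_notMem_of_parallel (hJ : IsDiscretePolymatroid J)
    (hj : b + Pi.single j 1 ∈ J) (hij : b + Pi.single i 1 + Pi.single j 1 ∉ J) :
    b + Pi.single i 1 + Pi.single i 1 ∉ J := fun h =>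
  hij (add_right_comm b _ _ ▸ hJ.add_single_mem_of_parallel hj hij h)

theorem exists_common_continuation (hJ : IsDiscretePolymatroid J) (hi : b + Pi.single i 1 ∈ J)
    (hj : b + Pi.single j 1 ∈ J) (hb : ∑ i, b i + 2 < polyRk J) :
    ∃ l, b + Pi.single i 1 + Pi.single l 1 ∈ J ∧ b + Pi.single j 1 + Pi.single l 1 ∈ J := by
  by_cases hij : b + Pi.single i 1 + Pi.single j 1 ∈ J
  · obtain ⟨l, hl⟩ := hJ.exists_add_single_mem hij (by simp only [sum_add_single]; omega)
    refine ⟨l, hJ.mem_of_add_mem (b := Pi.single j 1) ?_, hJ.mem_of_add_mem (b := Pi.single i 1) ?_⟩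
    · rwa [add_right_comm]
    · rwa [add_right_comm, add_right_comm b]
  · obtain ⟨l, hl⟩ := hJ.exists_add_single_mem hi (by rw [sum_add_single]; omega)
    exact ⟨l, hl, hJ.add_single_mem_of_parallel hj hij hl⟩

theorem pParClass_eq_iff (hJ : IsDiscretePolymatroid J) (hi : i ∈ pCont J b) (hj : j ∈ pCont J b) :
    pParClass J b i = pParClass J b j ↔ i = j ∨ b + Pi.single i 1 + Pi.single j 1 ∉ J := by
  rw [mem_pCont] at hi hj
  constructor
  · intro h
    have hmem : j ∈ pParClass J b i := by
      rw [h]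
      simp [pParClass, mem_pCont, hj]
    exact (Finset.mem_filter.1 hmem).2.imp_left Eq.symm
  · rintro (rfl | hij)
    · rfl
    · have hji : b + Pi.single j 1 + Pi.single i 1 ∉ J := by rwa [add_right_comm]
      have hiff (l) :
          b + Pi.single i 1 + Pi.single l 1 ∈ J ↔ b + Pi.single j 1 + Pi.single l 1 ∈ J :=
        ⟨hJ.add_single_mem_of_parallel hj hij, hJ.add_single_mem_of_parallel hi hji⟩
      ext l
      simp only [pParClass, Finset.mem_filter, hiff]
      grind

end IsDiscretePolymatroid

end Polymatroid

section Functional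

open MvPolynomial

variable (J : Finset (Fin n → ℕ)) (t : ℝ)

/-- The coefficient `t ^ π(a)` of a multiset `a`, extended by zero outside `J`. -/
def piWeight (a : Fin n → ℕ) : ℝ :=
  if a ∈ J then t ^ ∑ i, Nat.choose (a i) 2 else 0

/-- The linear functional on polynomials sending `X ^ a` to `piWeight J t a`. Its value at
`X ^ a * (∑ i, ω i • X i) ^ m` is, up to `m!`, the `ω`-weighted count of the extensions of `a` by
multisets of size `m`, and multiplication by variables encodes the passage to continuations. -/
def weightFunctional : MvPolynomial (Fin n) ℝ →ₗ[ℝ] ℝ :=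
  (basisMonomials (Fin n) ℝ).constr ℝ fun a => piWeight J t a

/-- The monomial `X ^ a`, for an exponent given as a plain function. -/
def powMonomial (a : Fin n → ℕ) : MvPolynomial (Fin n) ℝ := ∏ i, X i ^ a i

/-- The linear form `∑ i, u i • X i`. -/
def linearForm : (Fin n → ℝ) →ₗ[ℝ] MvPolynomial (Fin n) ℝ := Fintype.linearCombination ℝ X

variable {J t} {b : Fin n → ℕ} {ω : Fin n → ℝ}

theorem powMonomial_add (a b : Fin n → ℕ) :
    powMonomial (a + b) = powMonomial a * powMonomial b := by
  simp [powMonomial, pow_add, Finset.prod_mul_distrib]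

theorem powMonomial_single (i : Fin n) : powMonomial (Pi.single i 1) = X i := by
  rw [powMonomial, Finset.prod_eq_single i (fun j _ hj => by simp [hj]) (by simp)]
  simp

theorem powMonomial_add_single (a : Fin n → ℕ) (i : Fin n) :
    powMonomial (a + Pi.single i 1) = powMonomial a * X i := by
  rw [powMonomial_add, powMonomial_single]

theorem weightFunctional_powMonomial (a : Fin n → ℕ) :
    weightFunctional J t (powMonomial a) = piWeight J t a := by
  have hmon : powMonomial a = basisMonomials (Fin n) ℝ (Finsupp.equivFunOnFinite.symm a) := by
    simp only [coe_basisMonomials]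
    rw [monomial_eq, Finsupp.prod_fintype _ _ fun i => pow_zero _]
    simp [powMonomial]
  rw [hmon, weightFunctional, Module.Basis.constr_basis]
  rfl

theorem weightFunctional_mul_linearForm (f : MvPolynomial (Fin n) ℝ) (u : Fin n → ℝ) :
    weightFunctional J t (f * linearForm u) = ∑ i, u i * weightFunctional J t (f * X i) := by
  simp [linearForm, Fintype.linearCombination_apply, Finset.mul_sum]

theorem weightFunctional_linearForm_pow (ω : Fin n → ℝ) (m : ℕ) :
    weightFunctional J t (linearForm ω ^ m) = m.factorial * Jwt J ω t m := by
  have hexpand : linearForm ω ^ m = ∑ a ∈ Finset.piAntidiag Finset.univ m,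
      (Nat.multinomial Finset.univ a * ∏ i, ω i ^ a i : ℝ) • powMonomial a := by
    rw [linearForm, Fintype.linearCombination_apply, Finset.sum_pow_eq_sum_piAntidiag]
    refine Finset.sum_congr rfl fun a _ => ?_
    simp [smul_eq_C_mul, mul_pow, Finset.prod_mul_distrib, powMonomial, mul_assoc]
  have hmultinomial : ∀ a ∈ Finset.piAntidiag (Finset.univ : Finset (Fin n)) m,
      (Nat.multinomial Finset.univ a : ℝ) = m.factorial / ∏ i, ((a i).factorial : ℝ) := by
    intro a ha
    rw [eq_div_iff
        (Finset.prod_ne_zero_iff.2 fun i _ => Nat.cast_ne_zero.2 (Nat.factorial_ne_zero _)),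
      mul_comm, ← (Finset.mem_piAntidiag.1 ha).1, ← Nat.multinomial_spec]
    push_cast
    rfl
  have hsize : (Finset.piAntidiag Finset.univ m).filter (· ∈ J) = polySize J m := by
    ext a
    simp [polySize, and_comm]
  simp only [hexpand, map_sum, map_smul, weightFunctional_powMonomial, piWeight, smul_eq_mul,
    mul_ite, mul_zero]
  rw [← Finset.sum_filter, hsize, Jwt, Finset.mul_sum]
  refine Finset.sum_congr rfl fun a ha => ?_
  rw [← hsize] at ha
  rw [hmultinomial a (Finset.mem_filter.1 ha).1]
  ring

theorem weightFunctional_powMonomial_mul_linearForm_pow_succ (b : Fin n → ℕ) (m : ℕ) :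
    weightFunctional J t (powMonomial b * linearForm ω ^ (m + 1)) =
      ∑ i, ω i * weightFunctional J t (powMonomial (b + Pi.single i 1) * linearForm ω ^ m) := by
  rw [pow_succ, ← mul_assoc, weightFunctional_mul_linearForm]
  simp only [powMonomial_add_single, mul_right_comm]

theorem weightFunctional_nonneg (hω : ∀ i, 0 ≤ ω i) (ht : 0 ≤ t) (b : Fin n → ℕ) (m : ℕ) :
    0 ≤ weightFunctional J t (powMonomial b * linearForm ω ^ m) := by
  induction m generalizing b with
  | zero =>
    rw [pow_zero, mul_one, weightFunctional_powMonomial, piWeight]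
    positivity
  | succ m ih =>
    rw [weightFunctional_powMonomial_mul_linearForm_pow_succ]
    exact Finset.sum_nonneg fun i _ => mul_nonneg (hω i) (ih _)

namespace IsDiscretePolymatroid

theorem weightFunctional_powMonomial_mul_eq_zero (hJ : IsDiscretePolymatroid J) (hb : b ∉ J)
    (f : MvPolynomial (Fin n) ℝ) : weightFunctional J t (powMonomial b * f) = 0 := by
  induction f using MvPolynomial.induction_on generalizing b with
  | C r =>
    rw [mul_comm, ← smul_eq_C_mul, map_smul, weightFunctional_powMonomial, piWeight, if_neg hb,
      smul_zero]
  | add p q hp hq => rw [mul_add, map_add, hp hb, hq hb, add_zero]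
  | mul_X p i hp =>
    rw [mul_left_comm, mul_comm p, ← powMonomial_add_single]
    exact hp fun h => hb (hJ.mem_of_add_mem h)

theorem weightFunctional_pos (hJ : IsDiscretePolymatroid J) (hω : ∀ i, 0 < ω i) (ht : 0 < t)
    (hb : b ∈ J) {m : ℕ} (hm : ∑ i, b i + m ≤ polyRk J) :
    0 < weightFunctional J t (powMonomial b * linearForm ω ^ m) := by
  induction m generalizing b with
  | zero =>
    rw [pow_zero, mul_one, weightFunctional_powMonomial, piWeight, if_pos hb]
    positivity
  | succ m ih =>
    rw [weightFunctional_powMonomial_mul_linearForm_pow_succ]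
    obtain ⟨i, hi⟩ := hJ.exists_add_single_mem hb (by omega)
    have hω0 := fun i => (hω i).le
    refine Finset.sum_pos'
      (fun i _ => mul_nonneg (hω0 i) (weightFunctional_nonneg hω0 ht.le _ _))
      ⟨i, Finset.mem_univ i, mul_pos (hω i) (ih hi ?_)⟩
    rw [sum_add_single]
    omega

end IsDiscretePolymatroid

end Functional

section HessianForm

open MvPolynomial

/-- The affine form `∑ i, u i • X i + s` attached to a pair `(u, s)`. -/
def affineForm : (Fin n → ℝ) × ℝ →ₗ[ℝ] MvPolynomial (Fin n) ℝ :=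
  linearForm.coprod (Algebra.linearMap ℝ _)

/-- The Hessian of the weighted counts in direction `f`, with one homogenizing coordinate whose
square is rescaled by `c`. The reverse Cauchy–Schwarz inequality for `f = linearForm ω ^ m` compares
the counts of sizes `m`, `m + 1` and `m + 2`, and `c` carries the constant of that comparison. -/
def hessianForm (J : Finset (Fin n → ℕ)) (t c : ℝ) (f : MvPolynomial (Fin n) ℝ) :
    LinearMap.BilinForm ℝ ((Fin n → ℝ) × ℝ) :=
  LinearMap.mk₂ ℝ
    (fun x y => weightFunctional J t (f * affineForm x * affineForm y) +
      (c - 1) * (x.2 * y.2) * weightFunctional J t f)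
    (fun x x' y => by simp only [map_add, mul_add, add_mul, Prod.snd_add]; ring)
    (fun r x y => by
      simp only [map_smul, mul_smul_comm, smul_mul_assoc, Prod.smul_snd, smul_eq_mul]; ring)
    (fun x y y' => by simp only [map_add, mul_add, add_mul, Prod.snd_add]; ring)
    (fun r x y => by
      simp only [map_smul, mul_smul_comm, Prod.smul_snd, smul_eq_mul]; ring)

variable {J : Finset (Fin n → ℕ)} {t c : ℝ} {b : Fin n → ℕ} {ω : Fin n → ℝ}
  {f g : MvPolynomial (Fin n) ℝ} {x y : (Fin n → ℝ) × ℝ}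

theorem affineForm_apply (x : (Fin n → ℝ) × ℝ) : affineForm x = linearForm x.1 + C x.2 := rfl

theorem linearForm_single (i : Fin n) (r : ℝ) : linearForm (Pi.single i r) = r • X i :=
  Fintype.linearCombination_apply_single ℝ X i r

theorem hessianForm_apply : hessianForm J t c f x y =
    weightFunctional J t (f * affineForm x * affineForm y) +
      (c - 1) * (x.2 * y.2) * weightFunctional J t f := rfl

theorem hessianForm_isSymm : (hessianForm J t c f).IsSymm :=
  ⟨fun x y => by simp only [hessianForm_apply, mul_right_comm f, mul_comm x.2]⟩

theorem hessianForm_linear_left (u : Fin n → ℝ) : hessianForm J t c f (u, 0) x =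
    weightFunctional J t (f * linearForm u * affineForm x) := by
  simp [hessianForm_apply, affineForm_apply (u, 0)]

theorem hessianForm_linear_linear (u v : Fin n → ℝ) : hessianForm J t c f (u, 0) (v, 0) =
    weightFunctional J t (f * linearForm u * linearForm v) := by
  simp [hessianForm_linear_left, affineForm_apply]

theorem hessianForm_mul_linearForm_single (i : Fin n) (r : ℝ) :
    hessianForm J t c (f * linearForm ω) (Pi.single i r, 0) x =
      r * hessianForm J t c (f * X i) (ω, 0) x := by
  rw [hessianForm_linear_left, hessianForm_linear_left, linearForm_single, mul_smul_comm,
    smul_mul_assoc, map_smul, smul_eq_mul, mul_right_comm f]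

theorem hessianForm_snd_snd : hessianForm J t c f (0, 1) (0, 1) = c * weightFunctional J t f := by
  simp only [hessianForm_apply, affineForm_apply, map_zero, map_one, zero_add, mul_one]
  ring

theorem reverseCauchySchwarz_hessianForm_snd
    (h : ∀ u, c * weightFunctional J t (f * linearForm u ^ 2) * weightFunctional J t f ≤
      weightFunctional J t (f * linearForm u) ^ 2) :
    ReverseCauchySchwarz (hessianForm J t c f) (0, 1) := by
  rintro ⟨u, s⟩
  have haffine : hessianForm J t c f (u, s) (u, s) = weightFunctional J t (f * linearForm u ^ 2) +
      2 * s * weightFunctional J t (f * linearForm u) + c * s ^ 2 * weightFunctional J t f := by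
    have hpoly : f * affineForm (u, s) * affineForm (u, s) =
        f * linearForm u ^ 2 + (2 * s) • (f * linearForm u) + s ^ 2 • f := by
      simp only [affineForm_apply, smul_eq_C_mul, map_mul, map_pow, map_ofNat]
      ring
    rw [hessianForm_apply, hpoly]
    simp only [map_add, map_smul, smul_eq_mul]
    ring
  have hmixed : hessianForm J t c f (u, s) (0, 1) =
      weightFunctional J t (f * linearForm u) + c * s * weightFunctional J t f := by
    have hpoly : f * affineForm (u, s) * affineForm (0, 1) = f * linearForm u + s • f := by
      simp only [affineForm_apply, smul_eq_C_mul, map_zero, map_one]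
      ring
    rw [hessianForm_apply, hpoly]
    simp only [map_add, map_smul, smul_eq_mul]
    ring
  rw [haffine, hessianForm_snd_snd, hmixed]
  linarith [h u]

namespace IsDiscretePolymatroid

theorem reflTransGen_pCont (hJ : IsDiscretePolymatroid J) (hb : ∑ i, b i + 2 < polyRk J)
    {r : pCont J b → pCont J b → Prop}
    (hr : ∀ i j : pCont J b, b + Pi.single i.1 1 + Pi.single j.1 1 ∈ J → r i j)
    (i j : pCont J b) : Relation.ReflTransGen r i j := by
  obtain ⟨l, hil, hjl⟩ :=
    hJ.exists_common_continuation (mem_pCont.1 i.2) (mem_pCont.1 j.2) hb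
  have hl : b + Pi.single l 1 ∈ J :=
    hJ.mem_of_add_mem (b := Pi.single i.1 1) (by rwa [add_right_comm])
  exact .tail (.single (hr i ⟨l, mem_pCont.2 hl⟩ hil)) (hr _ j (by rwa [add_right_comm]))

theorem weightFunctional_mul_linearForm_eq_sum_pCont (hJ : IsDiscretePolymatroid J)
    (g : MvPolynomial (Fin n) ℝ) (u : Fin n → ℝ) :
    weightFunctional J t (powMonomial b * g * linearForm u) =
      ∑ i ∈ pCont J b, u i * weightFunctional J t (powMonomial (b + Pi.single i 1) * g) := by
  rw [weightFunctional_mul_linearForm]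
  simp only [powMonomial_add_single, mul_right_comm _ g]
  refine (Finset.sum_subset (Finset.subset_univ _) fun i _ hi => ?_).symm
  rw [← powMonomial_add_single,
    hJ.weightFunctional_powMonomial_mul_eq_zero (mt mem_pCont.2 hi), mul_zero]

theorem hessianForm_mul_linearForm_eq_sum_pCont (hJ : IsDiscretePolymatroid J) :
    hessianForm J t c (powMonomial b * g * linearForm ω) x y =
      ∑ i ∈ pCont J b, ω i * hessianForm J t c (powMonomial (b + Pi.single i 1) * g) x y := by
  have hcomm : powMonomial b * g * linearForm ω * affineForm x * affineForm y =
      powMonomial b * (g * affineForm x * affineForm y) * linearForm ω := by ring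
  simp only [hessianForm_apply, hcomm, hJ.weightFunctional_mul_linearForm_eq_sum_pCont, mul_add,
    Finset.sum_add_distrib, Finset.mul_sum, mul_left_comm (ω _)]
  simp only [← mul_assoc]

theorem hessianForm_linear_eq_sum_pCont (hJ : IsDiscretePolymatroid J) :
    hessianForm J t c (powMonomial b * g) (ω, 0) x =
      ∑ i ∈ pCont J b, hessianForm J t c (powMonomial b * g) (Pi.single i (ω i), 0) x := by
  have hcomm : powMonomial b * g * linearForm ω * affineForm x =
      powMonomial b * (g * affineForm x) * linearForm ω := by ring
  rw [hessianForm_linear_left, hcomm, hJ.weightFunctional_mul_linearForm_eq_sum_pCont]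
  simp only [hessianForm_linear_left, linearForm_single, powMonomial_add_single, mul_smul_comm,
    smul_mul_assoc, map_smul, smul_eq_mul, mul_right_comm _ (X _), ← mul_assoc]

theorem reverseCauchySchwarz_hessianForm_succ (hJ : IsDiscretePolymatroid J) (hω : ∀ i, 0 < ω i)
    (ht : 0 < t) {m : ℕ} (hrk : ∑ i, b i + m + 3 ≤ polyRk J)
    (hcont : ∀ i ∈ pCont J b, ReverseCauchySchwarz
      (hessianForm J t c (powMonomial (b + Pi.single i 1) * linearForm ω ^ m)) (ω, 0)) :
    ReverseCauchySchwarz (hessianForm J t c (powMonomial b * linearForm ω ^ (m + 1))) (ω, 0) := by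
  let D (i : Fin n) := hessianForm J t c (powMonomial (b + Pi.single i 1) * linearForm ω ^ m)
  let e (i : pCont J b) : (Fin n → ℝ) × ℝ := (Pi.single i.1 (ω i), 0)
  have hpow : powMonomial b * linearForm ω ^ (m + 1) =
      powMonomial b * linearForm ω ^ m * linearForm ω := by ring
  have hrow (i : pCont J b) (x) : hessianForm J t c (powMonomial b * linearForm ω ^ (m + 1))
      (e i) x = ω i * D i (ω, 0) x := by
    rw [hpow, hessianForm_mul_linearForm_single, mul_right_comm, ← powMonomial_add_single]
  have hentry (i j : pCont J b) : D i (ω, 0) (e j) = ω j * weightFunctional J t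
      (powMonomial (b + Pi.single i.1 1 + Pi.single j.1 1) * linearForm ω ^ (m + 1)) := by
    rw [hessianForm_linear_linear, linearForm_single, mul_smul_comm, map_smul, smul_eq_mul,
      powMonomial_add_single _ j.1, pow_succ, mul_right_comm _ (X _), ← mul_assoc]
  have hdeg (i : pCont J b) : 0 < D i (ω, 0) (ω, 0) := by
    rw [hessianForm_linear_linear, mul_assoc, mul_assoc, ← pow_two, ← pow_add]
    refine hJ.weightFunctional_pos hω ht (mem_pCont.1 i.2) ?_
    rw [sum_add_single]
    omega
  refine reverseCauchySchwarz_of_le_sum hessianForm_isSymm (e := e)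
    (fun x => by rw [hJ.hessianForm_linear_eq_sum_pCont, ← Finset.sum_coe_sort (pCont J b)])
    (fun i j => ?_)
    (hJ.reflTransGen_pCont (by omega) fun i j hij => ?_)
    (fun i => hrow i _ ▸ (mul_pos (hω i) (hdeg i)).ne') fun x => ?_
  · rw [hrow, hentry]
    have hω0 := fun i => (hω i).le
    exact mul_nonneg (hω0 i) (mul_nonneg (hω0 j) (weightFunctional_nonneg hω0 ht.le _ _))
  · rw [hrow, hentry]
    refine mul_pos (hω i) (mul_pos (hω j) (hJ.weightFunctional_pos hω ht hij ?_))
    simp only [sum_add_single]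
    omega
  · simp only [hrow]
    rw [hpow, hJ.hessianForm_mul_linearForm_eq_sum_pCont, ← Finset.sum_coe_sort (pCont J b)]
    refine Finset.sum_le_sum fun i _ => ?_
    have hi : D i x x * D i (ω, 0) (ω, 0) ≤ D i x (ω, 0) ^ 2 := hcont i i.2 x
    rw [hessianForm_isSymm.eq x (ω, 0)] at hi
    rw [mul_pow, pow_two (ω i), mul_assoc (ω i), mul_div_mul_left _ _ (hω i).ne', mul_div_assoc]
    exact mul_le_mul_of_nonneg_left ((le_div_iff₀ (hdeg i)).2 hi) (hω i).le

theorem reverseCauchySchwarz_hessianForm (hJ : IsDiscretePolymatroid J) (hω : ∀ i, 0 < ω i)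
    (ht : 0 < t) (hc : 0 < c) {k : ℕ} (hk : k + 2 ≤ polyRk J)
    (hbase : ∀ b ∈ J, ∑ i, b i = k → ∀ u,
      c * weightFunctional J t (powMonomial b * linearForm u ^ 2) *
          weightFunctional J t (powMonomial b) ≤
        weightFunctional J t (powMonomial b * linearForm u) ^ 2)
    (hb : b ∈ J) {m : ℕ} (hm : ∑ i, b i + m = k) :
    ReverseCauchySchwarz (hessianForm J t c (powMonomial b * linearForm ω ^ m)) (ω, 0) := by
  induction m generalizing b with
  | zero =>
    rw [pow_zero, mul_one]
    have hsnd : ReverseCauchySchwarz (hessianForm J t c (powMonomial b)) (0, 1) :=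
      reverseCauchySchwarz_hessianForm_snd (hbase b hb hm)
    refine hsnd.of_pos hessianForm_isSymm ?_ ?_
    · rw [hessianForm_snd_snd, weightFunctional_powMonomial, piWeight, if_pos hb]
      positivity
    · rw [hessianForm_linear_linear, mul_assoc, ← pow_two]
      exact weightFunctional_nonneg (fun i => (hω i).le) ht.le b 2
  | succ m ih =>
    refine hJ.reverseCauchySchwarz_hessianForm_succ hω ht (by omega) fun i hi =>
      ih (mem_pCont.1 hi) ?_
    rw [sum_add_single]
    omega

end IsDiscretePolymatroid

end HessianForm

section ParallelClasses

theorem sum_sum_ite_eq {ι κ R : Type*} [DecidableEq κ] [CommSemiring R] (s : Finset ι)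
    (g : ι → κ) (f : ι → R) :
    ∑ i ∈ s, ∑ j ∈ s, (if g i = g j then f i * f j else 0) =
      ∑ P ∈ s.image g, (∑ i ∈ s with g i = P, f i) ^ 2 := by
  have hrow (i : ι) : ∑ j ∈ s, (if g i = g j then f i * f j else 0) =
      f i * ∑ j ∈ s with g j = g i, f j := by
    rw [Finset.sum_filter, Finset.mul_sum]
    exact Finset.sum_congr rfl fun j _ => by rw [mul_ite, mul_zero]; simp only [eq_comm]
  rw [← Finset.sum_fiberwise_of_maps_to fun i hi => Finset.mem_image_of_mem g hi]
  refine Finset.sum_congr rfl fun P _ => ?_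
  rw [pow_two, Finset.sum_mul]
  refine Finset.sum_congr rfl fun i hi => ?_
  rw [hrow, (Finset.mem_filter.1 hi).2]

theorem sq_sum_le_card_image_mul {ι κ : Type*} [DecidableEq κ] (s : Finset ι) (g : ι → κ)
    (f : ι → ℝ) : (∑ i ∈ s, f i) ^ 2 ≤
      (s.image g).card * ∑ i ∈ s, ∑ j ∈ s, (if g i = g j then f i * f j else 0) := by
  rw [sum_sum_ite_eq, ← Finset.sum_fiberwise_of_maps_to fun i hi => Finset.mem_image_of_mem g hi]
  exact sq_sum_le_card_mul_sum_sq

open MvPolynomial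

variable {J : Finset (Fin n → ℕ)} {t : ℝ} {b : Fin n → ℕ} {i j : Fin n}

namespace IsDiscretePolymatroid

theorem piWeight_add_single (hJ : IsDiscretePolymatroid J) (hi : b + Pi.single i 1 ∈ J) :
    piWeight J t (b + Pi.single i 1) = piWeight J t b * t ^ b i := by
  rw [piWeight, piWeight, if_pos hi, if_pos (hJ.mem_of_add_mem hi), sum_choose_two_add_single,
    pow_add]

/-- When `i` and `j` are distinct and parallel, neither of them continues twice, and the factor is
`1 - (1 - t) - t = 0`. -/
theorem piWeight_add_single_add_single (hJ : IsDiscretePolymatroid J) (hi : i ∈ pCont J b)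
    (hj : j ∈ pCont J b) :
    piWeight J t (b + Pi.single i 1 + Pi.single j 1) = piWeight J t b * t ^ b i * t ^ b j *
      (1 - if pParClass J b i = pParClass J b j then (1 - t) +
        t * ((if b + Pi.single i 1 + Pi.single i 1 ∈ J then 0 else 1) *
          (if b + Pi.single j 1 + Pi.single j 1 ∈ J then 0 else 1)) else 0) := by
  have hiJ := mem_pCont.1 hi
  have hjJ := mem_pCont.1 hj
  simp only [hJ.pParClass_eq_iff hi hj]
  by_cases hij : b + Pi.single i 1 + Pi.single j 1 ∈ J
  · rw [hJ.piWeight_add_single hij, hJ.piWeight_add_single hiJ]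
    rcases eq_or_ne i j with rfl | hne
    · simp [hij, pow_succ, mul_assoc]
    · simp [hij, hne, hne.symm]
  · have hi2 := hJ.add_single_twice_notMem_of_parallel hjJ hij
    have hj2 := hJ.add_single_twice_notMem_of_parallel (i := j) hiJ (by rwa [add_right_comm])
    simp [piWeight, hij, hi2, hj2]

theorem weightFunctional_mul_linearForm_eq_piWeight_mul (hJ : IsDiscretePolymatroid J)
    (u : Fin n → ℝ) : weightFunctional J t (powMonomial b * linearForm u) =
      piWeight J t b * ∑ i ∈ pCont J b, t ^ b i * u i := by
  have h := hJ.weightFunctional_mul_linearForm_eq_sum_pCont (t := t) (b := b) 1 u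
  simp only [mul_one, weightFunctional_powMonomial] at h
  rw [h, Finset.mul_sum]
  refine Finset.sum_congr rfl fun i hi => ?_
  rw [hJ.piWeight_add_single (mem_pCont.1 hi)]
  ring

theorem weightFunctional_mul_linearForm_sq_eq_sum_pCont (hJ : IsDiscretePolymatroid J)
    (u : Fin n → ℝ) : weightFunctional J t (powMonomial b * linearForm u ^ 2) =
      ∑ i ∈ pCont J b, ∑ j ∈ pCont J b,
        u i * u j * piWeight J t (b + Pi.single i 1 + Pi.single j 1) := by
  have hmonomial (i : Fin n) : powMonomial (b + Pi.single i 1) * linearForm u =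
      powMonomial b * X i * linearForm u := by rw [powMonomial_add_single]
  rw [pow_two, ← mul_assoc, hJ.weightFunctional_mul_linearForm_eq_sum_pCont]
  simp only [hmonomial, hJ.weightFunctional_mul_linearForm_eq_sum_pCont, ← powMonomial_add_single,
    weightFunctional_powMonomial, Finset.mul_sum, ← mul_assoc, add_right_comm b]

theorem weightFunctional_mul_linearForm_sq_le (hJ : IsDiscretePolymatroid J) (ht0 : 0 ≤ t)
    (ht1 : t ≤ 1) (u : Fin n → ℝ) {p : ℕ} (hp : (pParClasses J b).card ≤ p) :
    p * weightFunctional J t (powMonomial b * linearForm u ^ 2) *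
        weightFunctional J t (powMonomial b) ≤
      (p - 1 + t) * weightFunctional J t (powMonomial b * linearForm u) ^ 2 := by
  let z (i : Fin n) : ℝ := t ^ b i * u i
  let y (i : Fin n) : ℝ := if b + Pi.single i 1 + Pi.single i 1 ∈ J then 0 else z i
  let Q (v : Fin n → ℝ) : ℝ := ∑ i ∈ pCont J b, ∑ j ∈ pCont J b,
    if pParClass J b i = pParClass J b j then v i * v j else 0
  have hQ (v) : 0 ≤ Q v := by
    simp only [Q, sum_sum_ite_eq]
    exact Finset.sum_nonneg fun P _ => sq_nonneg _
  have hquad : weightFunctional J t (powMonomial b * linearForm u ^ 2) =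
      piWeight J t b * ((∑ i ∈ pCont J b, z i) ^ 2 - (1 - t) * Q z - t * Q y) := by
    rw [hJ.weightFunctional_mul_linearForm_sq_eq_sum_pCont, pow_two, Finset.sum_mul_sum]
    simp only [Q, Finset.mul_sum, ← Finset.sum_sub_distrib]
    refine Finset.sum_congr rfl fun i hi => Finset.sum_congr rfl fun j hj => ?_
    rw [hJ.piWeight_add_single_add_single hi hj]
    simp only [y, z]
    split_ifs <;> ring
  have hclasses : (∑ i ∈ pCont J b, z i) ^ 2 ≤ p * Q z :=
    (sq_sum_le_card_image_mul _ (pParClass J b) _).trans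
      (mul_le_mul_of_nonneg_right (Nat.cast_le.2 hp) (hQ z))
  rw [hquad, hJ.weightFunctional_mul_linearForm_eq_piWeight_mul, weightFunctional_powMonomial]
  have hsum : p * ((∑ i ∈ pCont J b, z i) ^ 2 - (1 - t) * Q z - t * Q y) ≤
      (p - 1 + t) * (∑ i ∈ pCont J b, z i) ^ 2 := by
    have := mul_le_mul_of_nonneg_left hclasses (sub_nonneg.2 ht1)
    have := mul_nonneg (Nat.cast_nonneg p) (mul_nonneg ht0 (hQ y))
    linarith
  linarith [mul_le_mul_of_nonneg_left hsum (sq_nonneg (piWeight J t b))]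

end IsDiscretePolymatroid

end ParallelClasses

section LogConcavity

variable {J : Finset (Fin n → ℕ)} {t : ℝ} {ω : Fin n → ℝ}

theorem continuous_jwt (J : Finset (Fin n → ℕ)) (ω : Fin n → ℝ) (k : ℕ) :
    Continuous fun t => Jwt J ω t k := by
  unfold Jwt
  fun_prop

namespace IsDiscretePolymatroid

theorem weightFunctional_linearForm_pow_mul_le (hJ : IsDiscretePolymatroid J) (hω : ∀ i, 0 < ω i)
    (ht0 : 0 < t) (ht1 : t ≤ 1) {k : ℕ} (hk : k + 2 ≤ polyRk J) (hp : 0 < pContNum J k) :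
    pContNum J k * (weightFunctional J t (linearForm ω ^ k) *
        weightFunctional J t (linearForm ω ^ (k + 2))) ≤
      (pContNum J k - 1 + t) * weightFunctional J t (linearForm ω ^ (k + 1)) ^ 2 := by
  set p := (pContNum J k : ℝ)
  have hp0 : 0 < p := Nat.cast_pos.2 hp
  have hpt : 0 < p - 1 + t := by linarith [(Nat.one_le_cast.2 hp : (1 : ℝ) ≤ p)]
  have hbase : ∀ b ∈ J, ∑ i, b i = k → ∀ u,
      p / (p - 1 + t) * weightFunctional J t (powMonomial b * linearForm u ^ 2) *
          weightFunctional J t (powMonomial b) ≤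
        weightFunctional J t (powMonomial b * linearForm u) ^ 2 := by
    intro b hb hbk u
    rw [div_mul_eq_mul_div, div_mul_eq_mul_div, div_le_iff₀' hpt]
    exact hJ.weightFunctional_mul_linearForm_sq_le ht0.le ht1 u
      (Finset.le_sup (f := fun a => (pParClasses J a).card) (by simp [polySize, hb, hbk]))
  have h := hJ.reverseCauchySchwarz_hessianForm hω ht0 (div_pos hp0 hpt) hk hbase hJ.zero_mem
    (m := k) (by simp) (0, 1)
  rw [hessianForm_isSymm.eq (0, 1) (ω, 0), hessianForm_snd_snd, hessianForm_linear_linear,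
    hessianForm_linear_left, affineForm_apply] at h
  simp only [powMonomial, Pi.zero_apply, pow_zero, Finset.prod_const_one, one_mul, map_zero,
    map_one, zero_add, mul_one, ← pow_succ] at h
  rwa [div_mul_eq_mul_div, div_mul_eq_mul_div, div_le_iff₀' hpt, mul_assoc] at h

theorem jwt_mul_jwt_le_of_pos (hJ : IsDiscretePolymatroid J) (hω : ∀ i, 0 < ω i) (ht0 : 0 < t)
    (ht1 : t ≤ 1) {k : ℕ} (hk : k + 2 ≤ polyRk J) (hp : 0 < pContNum J k) :
    pContNum J k * (k + 2) * (Jwt J ω t k * Jwt J ω t (k + 2)) ≤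
      (pContNum J k - 1 + t) * (k + 1) * Jwt J ω t (k + 1) ^ 2 := by
  have h := hJ.weightFunctional_linearForm_pow_mul_le hω ht0 ht1 hk hp
  simp only [weightFunctional_linearForm_pow, Nat.factorial_succ] at h
  push_cast at h
  have hfac : (0 : ℝ) < (k.factorial : ℝ) ^ 2 * (k + 1) := by positivity
  refine le_of_mul_le_mul_left ?_ hfac
  linarith

theorem jwt_mul_jwt_le (hJ : IsDiscretePolymatroid J) (hω : ∀ i, 0 < ω i)
    (ht : t ∈ Set.Icc (0 : ℝ) 1) {k : ℕ} (hk : k + 2 ≤ polyRk J) (hp : 0 < pContNum J k) :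
    pContNum J k * (k + 2) * (Jwt J ω t k * Jwt J ω t (k + 2)) ≤
      (pContNum J k - 1 + t) * (k + 1) * Jwt J ω t (k + 1) ^ 2 := by
  rw [← closure_Ioc zero_ne_one] at ht
  have hcont := continuous_jwt J ω
  exact le_on_closure
    (f := fun t => pContNum J k * (k + 2) * (Jwt J ω t k * Jwt J ω t (k + 2)))
    (g := fun t => (pContNum J k - 1 + t) * (k + 1) * Jwt J ω t (k + 1) ^ 2)
    (fun s hs => hJ.jwt_mul_jwt_le_of_pos hω hs.1 hs.2 hk hp)
    (by fun_prop) (by fun_prop) ht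

end IsDiscretePolymatroid

end LogConcavity

/-- **Refined log-concavity for discrete polymatroids.** -/
theorem polymatroid_refined_log_concavity
    (J : Finset (Fin n → ℕ)) (h_ne : J.Nonempty)
    (h_hered : ∀ a ∈ J, ∀ b : Fin n → ℕ, b ≤ a → b ∈ J)
    (h_exch : ∀ a ∈ J, ∀ b ∈ J, (∑ i, a i) < (∑ i, b i) →
      ∃ i : Fin n, a i < b i ∧ a + Pi.single i 1 ∈ J)
    (ω : Fin n → ℝ) (hω : ∀ i, 0 < ω i)
    (t : ℝ) (ht0 : 0 ≤ t) (ht1 : t ≤ 1)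
    (k : ℕ) (hk1 : 1 ≤ k) (hk2 : k < polyRk J)
    (hpt : 0 < (pContNum J (k - 1) : ℝ) - 1 + t) :
    ((1 : ℝ) + 1 / (k : ℝ)) *
        (1 + (1 - t) / ((pContNum J (k - 1) : ℝ) - 1 + t)) *
        Jwt J ω t (k - 1) * Jwt J ω t (k + 1) ≤
      (Jwt J ω t k) ^ 2 := by
  obtain ⟨k, rfl⟩ := Nat.exists_eq_add_of_le' hk1
  rw [Nat.add_sub_cancel] at hpt ⊢
  have hp : 0 < pContNum J k := Nat.pos_of_ne_zero fun h => by
    rw [h, Nat.cast_zero] at hpt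
    linarith
  have hconst : (1 + 1 / ((k + 1 : ℕ) : ℝ)) * (1 + (1 - t) / ((pContNum J k : ℝ) - 1 + t)) =
      pContNum J k * (k + 2) / ((pContNum J k - 1 + t) * (k + 1)) := by
    push_cast
    field_simp
    ring
  have h := IsDiscretePolymatroid.jwt_mul_jwt_le ⟨h_ne, h_hered, h_exch⟩ hω ⟨ht0, ht1⟩ hk2 hp
  rw [hconst, mul_assoc, div_mul_eq_mul_div, div_le_iff₀' (by positivity)]
  exact h
end
end
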